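/- arXiv:1605.07061 — 5 statements merged into one kernel-verified Lean document; each statement's English description precedes it below -/
import Mathlib

section
/- Let M ∈ ℝ_+^{6×8} be the matrix with rows (0,0,0,0,1,1,1,1), (1,1,1,1,0,0,0,0), (0,0,1,1,0,0,1,1), (1,1,0,0,1,1,0,0), (0,1,0,1,0,1,0,1), (1,0,1,0,1,0,1,0). Then rank(M) = 4 and rrk+(M) = 8. -/
open Matrix

/-- The restricted nonnegative rank: the smallest inner dimension of a nonnegative
factorization `M = W * H` with `rank W = rank M`. -/
noncomputable def rrkPos {n m : ℕ} (M : Matrix (Fin n) (Fin m) ℝ) : ℕ :=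
  sInf {d : ℕ | ∃ W : Matrix (Fin n) (Fin d) ℝ, ∃ H : Matrix (Fin d) (Fin m) ℝ,
    (∀ i k, 0 ≤ W i k) ∧ (∀ k j, 0 ≤ H k j) ∧ M = W * H ∧ W.rank = M.rank}

/-- The `6 × 8` matrix corresponding to the 3D-cube nested polytope problem. -/
noncomputable def cubeMatrix : Matrix (Fin 6) (Fin 8) ℝ :=
  !![0, 0, 0, 0, 1, 1, 1, 1;
     1, 1, 1, 1, 0, 0, 0, 0;
     0, 0, 1, 1, 0, 0, 1, 1;
     1, 1, 0, 0, 1, 1, 0, 0;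
     0, 1, 0, 1, 0, 1, 0, 1;
     1, 0, 1, 0, 1, 0, 1, 0]

lemma cube_rank : cubeMatrix.rank = 4 := by
  apply le_antisymm
  · have h : cubeMatrix = (!![1,0,0,0; -1,0,0,1; 0,1,0,0; 0,-1,0,1; 0,0,1,0; 0,0,-1,1] :
        Matrix (Fin 6) (Fin 4) ℝ) * (!![0,0,0,0,1,1,1,1; 0,0,1,1,0,0,1,1; 0,1,0,1,0,1,0,1;
          1,1,1,1,1,1,1,1] : Matrix (Fin 4) (Fin 8) ℝ) := by
      ext i j
      fin_cases i <;> fin_cases j <;> simp [cubeMatrix, Matrix.mul_apply, Fin.sum_univ_succ]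
    rw [h]
    refine (Matrix.rank_mul_le_left _ _).trans ?_
    simpa using Matrix.rank_le_width (!![1,0,0,0; -1,0,0,1; 0,1,0,0; 0,-1,0,1; 0,0,1,0; 0,0,-1,1] :
        Matrix (Fin 6) (Fin 4) ℝ)
  · have h : (!![1,0,0,0,0,0; 0,0,1,0,0,0; 0,0,0,0,1,0; 1,1,0,0,0,0] :
        Matrix (Fin 4) (Fin 6) ℝ) * cubeMatrix * (!![-1,-1,-1,1; 0,0,1,0; 0,1,0,0; 0,0,0,0;
          1,0,0,0; 0,0,0,0; 0,0,0,0; 0,0,0,0] : Matrix (Fin 8) (Fin 4) ℝ) = 1 := by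
      ext i j
      fin_cases i <;> fin_cases j <;>
        simp [cubeMatrix, Matrix.mul_apply, Fin.sum_univ_succ]
    have h1 : (1 : Matrix (Fin 4) (Fin 4) ℝ).rank = 4 := by simp
    rw [← h] at h1
    rw [← h1]
    exact (Matrix.rank_mul_le_left _ _).trans (Matrix.rank_mul_le_right _ _)

set_option maxHeartbeats 2000000 in
lemma cube_lower {d : ℕ} (W : Matrix (Fin 6) (Fin d) ℝ) (H : Matrix (Fin d) (Fin 8) ℝ)
    (hW : ∀ i k, 0 ≤ W i k) (hH : ∀ k j, 0 ≤ H k j) (hM : cubeMatrix = W * H)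
    (hr : W.rank = cubeMatrix.rank) : 8 ≤ d := by
  have hle : LinearMap.range cubeMatrix.mulVecLin ≤ LinearMap.range W.mulVecLin := by
    rw [hM, Matrix.mulVecLin_mul]
    exact LinearMap.range_comp_le_range _ _
  have heq := Submodule.eq_of_le_of_finrank_eq hle hr.symm
  have hcol : ∀ k, W 0 k + W 1 k = W 2 k + W 3 k ∧ W 0 k + W 1 k = W 4 k + W 5 k := by
    intro k
    have hk : W.mulVecLin (Pi.single k 1) ∈ LinearMap.range cubeMatrix.mulVecLin := by
      rw [heq]; exact ⟨_, rfl⟩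
    obtain ⟨v, hv⟩ := hk
    have hv' : ∀ i, W i k = (cubeMatrix *ᵥ v) i := by
      intro i
      have := congrFun hv i
      simp at this
      exact this.symm
    simp only [hv']
    simp [cubeMatrix, Matrix.mulVec, dotProduct, Fin.sum_univ_succ]
    constructor <;> ring
  have hex : ∀ j, ∃ k, 0 < W 0 k + W 1 k ∧ ∀ i, cubeMatrix i j = 0 → W i k = 0 := by
    intro j
    have h1 : ∑ k, (W 0 k + W 1 k) * H k j = 1 := by
      have : cubeMatrix 0 j + cubeMatrix 1 j = 1 := by
        fin_cases j <;> simp [cubeMatrix]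
      rw [← this, hM]
      simp [Matrix.mul_apply, add_mul, Finset.sum_add_distrib]
    obtain ⟨k, -, hk⟩ := Finset.exists_ne_zero_of_sum_ne_zero (h1.trans_ne one_ne_zero)
    refine ⟨k, lt_of_le_of_ne (add_nonneg (hW _ _) (hW _ _)) (left_ne_zero_of_mul hk).symm, ?_⟩
    intro i hi
    rw [hM, Matrix.mul_apply, Finset.sum_eq_zero_iff_of_nonneg
      (fun k _ => mul_nonneg (hW _ _) (hH _ _))] at hi
    exact (mul_eq_zero.1 (hi k (Finset.mem_univ _))).resolve_right (right_ne_zero_of_mul hk)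
  choose f hf hz using hex
  have hinj : Function.Injective f := by
    intro a b hab
    have hp := hf a
    have ha := hz a
    have hb := hz b
    rw [← hab] at hb
    obtain ⟨c1, c2⟩ := hcol (f a)
    generalize f a = k at *
    clear hab hf hz hM hr hle heq hW hH hcol
    simp only [Fin.forall_fin_succ] at ha hb
    fin_cases a <;> fin_cases b <;> first
      | rfl
      | (exfalso; simp [cubeMatrix] at ha hb; obtain ⟨a1, a2, a3⟩ := ha; obtain ⟨b1, b2, b3⟩ := hb
         linarith)
  simpa using Fintype.card_le_of_injective f hinj

/-- For the 3D-cube matrix `M`, one has `rank M = 4` and `rrk+(M) = 8`. -/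
theorem stmt1 : cubeMatrix.rank = 4 ∧ rrkPos cubeMatrix = 8 := by
  refine ⟨cube_rank, ?_⟩
  have hmem : 8 ∈ {d : ℕ | ∃ W : Matrix (Fin 6) (Fin d) ℝ, ∃ H : Matrix (Fin d) (Fin 8) ℝ,
      (∀ i k, 0 ≤ W i k) ∧ (∀ k j, 0 ≤ H k j) ∧ cubeMatrix = W * H ∧
        W.rank = cubeMatrix.rank} := by
    refine ⟨cubeMatrix, 1, ?_, ?_, by simp, rfl⟩
    · intro i k
      fin_cases i <;> fin_cases k <;> simp [cubeMatrix]
    · intro i k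
      rw [Matrix.one_apply]
      split_ifs <;> norm_num
  apply le_antisymm
  · exact Nat.sInf_le hmem
  · refine le_csInf ⟨8, hmem⟩ ?_
    rintro d ⟨W, H, hW, hH, hM, hr⟩
    exact cube_lower W H hW hH hM hr
end

section
/- Let r, n, m, d ∈ ℕ, A ∈ ℚ^{n×(r−1)}, b ∈ ℚ^n be such that P = {x ∈ ℝ^{r−1} : Ax + b ≥ 0} is bounded and the augmented matrix (A b) ∈ ℚ^{n×r} has rank r. Let s_1, …, s_m ∈ ℚ^{r−1} be points of P whose convex hull S is full-dimensional (i.e., has nonempty interior in ℝ^{r−1}), and define M ∈ ℚ^{n×m} by M^j = A s_j + b for each j. Suppose q_1, …, q_d ∈ ℝ^{r−1} satisfy S ⊆ conv{q_1, …, q_d} ⊆ P. Define W ∈ ℝ^{n×d} by W^i = A q_i + b. Then W is nonnegative, there exists a column-stochastic matrix H ∈ ℝ_+^{d×m} with M = W·H and rank(W) = rank(M); moreover, if all q_i are rational, then W and H are rational. -/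
open Matrix Set

theorem aux_hull {ℓ d : ℕ} (q : Fin d → Fin ℓ → ℝ) (p : Fin ℓ → ℚ)
    (hp : (fun x => ((p x : ℝ))) ∈ convexHull ℝ (Set.range q)) :
    ∃ h : Fin d → ℝ, (∀ k, 0 ≤ h k) ∧ ∑ k, h k = 1 ∧
      (∀ x, ∑ k, h k * q k x = (p x : ℝ)) ∧
      ((∀ k x, ∃ c : ℚ, q k x = (c : ℝ)) → ∀ k, ∃ c : ℚ, h k = (c : ℝ)) := by
  classical
  obtain ⟨ι, hι, z, w, hz, hind, hw0, hw1, hwz⟩ := eq_pos_convex_span_of_mem_convexHull hp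
  have hf : ∀ i, ∃ k, q k = z i := fun i => hz ⟨i, rfl⟩
  choose f hf using hf
  refine ⟨fun k => ∑ i, if f i = k then w i else 0, ?_, ?_, ?_, ?_⟩
  · intro k
    refine Finset.sum_nonneg fun i _ => ?_
    split_ifs
    · exact (hw0 i).le
    · exact le_rfl
  · rw [Finset.sum_comm]
    simpa using hw1
  · intro x
    simp_rw [Finset.sum_mul]
    rw [Finset.sum_comm]
    have := congrFun hwz x
    simp only [Finset.sum_apply, Pi.smul_apply, smul_eq_mul] at this
    rw [← this]
    refine Finset.sum_congr rfl fun i _ => ?_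
    simp [ite_mul, hf i]
  · intro hrat
    obtain ⟨π, hπ⟩ := LinearMap.exists_leftInverse_of_injective (Algebra.linearMap ℚ ℝ)
      (LinearMap.ker_eq_bot.2 (algebraMap ℚ ℝ).injective)
    have hπc : ∀ c : ℚ, π (c : ℝ) = c := fun c => by
      simpa using LinearMap.congr_fun hπ c
    have hπm : ∀ (c : ℚ) (y : ℝ), π (y * (c : ℝ)) = π y * c := fun c y => by
      have : y * (c : ℝ) = c • y := by rw [Rat.smul_def, mul_comm]
      rw [this, map_smul, smul_eq_mul, mul_comm]
    have hwr : ∀ i, w i = (π (w i) : ℝ) := by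
      have key := (affineIndependent_iff.1 hind) Finset.univ (fun i => w i - (π (w i) : ℝ)) ?_ ?_
      · intro i
        have := key i (Finset.mem_univ i)
        linarith
      · rw [Finset.sum_sub_distrib, hw1, ← Rat.cast_sum, ← map_sum, hw1]
        have := hπc 1
        simp only [Rat.cast_one] at this
        simp [this]
      · funext x
        have h1 := congrFun hwz x
        simp only [Finset.sum_apply, Pi.smul_apply, smul_eq_mul] at h1
        have hzr : ∀ i, ∃ c : ℚ, z i x = (c : ℝ) := fun i => by
          rw [← hf i]; exact hrat _ _
        choose c hc using hzr
        simp only [hc] at h1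
        simp only [Finset.sum_apply, Pi.smul_apply, smul_eq_mul, hc, sub_mul, Pi.zero_apply,
          Finset.sum_sub_distrib]
        have h2 := congrArg π h1
        simp only [map_sum, hπm, hπc] at h2
        rw [h1, ← h2]
        push_cast
        ring
    intro k
    refine ⟨∑ i, if f i = k then π (w i) else 0, ?_⟩
    push_cast
    refine Finset.sum_congr rfl fun i _ => ?_
    split_ifs
    · exact hwr i
    · simp

theorem aux_mul {n ℓ a c : ℕ} (A : Matrix (Fin n) (Fin ℓ) ℝ) (b : Fin n → ℝ)
    (u : Fin a → Fin ℓ → ℝ) (v : Fin c → Fin ℓ → ℝ) (K : Matrix (Fin a) (Fin c) ℝ)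
    (hK : ∀ j, ∑ k, K k j = 1) (hv : ∀ j x, ∑ k, K k j * u k x = v j x)
    (U : Matrix (Fin n) (Fin a) ℝ) (V : Matrix (Fin n) (Fin c) ℝ)
    (hU : ∀ i k, U i k = A.mulVec (u k) i + b i)
    (hV : ∀ i j, V i j = A.mulVec (v j) i + b i) : V = U * K := by
  ext i j
  simp only [hV, Matrix.mul_apply, hU, add_mul, Finset.sum_add_distrib, ← Finset.mul_sum, hK,
    mul_one, Matrix.mulVec, dotProduct, ← hv]
  congr 1
  simp only [Finset.mul_sum, Finset.sum_mul]
  rw [Finset.sum_comm]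
  refine Finset.sum_congr rfl fun k _ => Finset.sum_congr rfl fun x _ => ?_
  ring

/-- Reduction from the nested polytope problem to restricted NMF: points spanning a
nested polytope determine a restricted NMF, preserving rationality.

Here `ℓ` plays the role of `r - 1`, so that the augmented matrix `(A b)` has `ℓ + 1 = r`
columns and full column rank `r`. -/
theorem stmt2 {ℓ n m d : ℕ}
    (A : Matrix (Fin n) (Fin ℓ) ℚ) (b : Fin n → ℚ)
    -- the outer polytope `P = {x ∈ ℝ^ℓ | A x + b ≥ 0}`
    (P : Set (Fin ℓ → ℝ))
    (hP : P = {x : Fin ℓ → ℝ | ∀ i, 0 ≤ (A.map ((↑) : ℚ → ℝ)).mulVec x i + (b i : ℝ)})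
    -- `P` is bounded (hence a polytope)
    (hPbdd : Bornology.IsBounded P)
    -- the augmented matrix `(A b)` has rank `ℓ + 1`, i.e. `P` is full-dimensional
    (hrank : (Matrix.of fun i : Fin n => Fin.snoc (fun j => A i j) (b i) :
        Matrix (Fin n) (Fin (ℓ + 1)) ℚ).rank = ℓ + 1)
    -- rational points `s_1, …, s_m` of `P`
    (s : Fin m → Fin ℓ → ℚ)
    (hsP : ∀ j, (fun x => ((s j x : ℝ))) ∈ P)
    -- their convex hull `S` is full-dimensional
    (S : Set (Fin ℓ → ℝ))
    (hS : S = convexHull ℝ (Set.range fun j : Fin m => fun x => ((s j x : ℝ))))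
    (hSfull : (interior S).Nonempty)
    -- the matrix `M` with columns `M^j = A s_j + b`
    (M : Matrix (Fin n) (Fin m) ℚ)
    (hM : ∀ j i, M i j = A.mulVec (s j) i + b i)
    -- points `q_1, …, q_d` spanning a nested polytope
    (q : Fin d → Fin ℓ → ℝ)
    (hq1 : S ⊆ convexHull ℝ (Set.range q))
    (hq2 : convexHull ℝ (Set.range q) ⊆ P)
    -- the matrix `W` with columns `W^i = A q_i + b`
    (W : Matrix (Fin n) (Fin d) ℝ)
    (hW : ∀ i k, W i k = (A.map ((↑) : ℚ → ℝ)).mulVec (q k) i + (b i : ℝ)) :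
    (∀ i k, 0 ≤ W i k) ∧
    ∃ H : Matrix (Fin d) (Fin m) ℝ,
      (∀ k j, 0 ≤ H k j) ∧ (∀ j, ∑ k, H k j = 1) ∧
      M.map ((↑) : ℚ → ℝ) = W * H ∧
      W.rank = (M.map ((↑) : ℚ → ℝ)).rank ∧
      ((∀ k x, ∃ c : ℚ, q k x = (c : ℝ)) →
        (∀ i k, ∃ c : ℚ, W i k = (c : ℝ)) ∧ (∀ k j, ∃ c : ℚ, H k j = (c : ℝ))) := by
  have hM' : ∀ i j, (M.map ((↑) : ℚ → ℝ)) i j =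
      (A.map ((↑) : ℚ → ℝ)).mulVec (fun x => ((s j x : ℝ))) i + (b i : ℝ) := by
    intro i j
    simp [Matrix.map_apply, hM, Matrix.mulVec, dotProduct]
  refine ⟨?_, ?_⟩
  · intro i k
    have : q k ∈ P := hq2 (subset_convexHull ℝ _ ⟨k, rfl⟩)
    rw [hP] at this
    rw [hW]
    exact this i
  have hmem : ∀ j, (fun x => ((s j x : ℝ))) ∈ convexHull ℝ (Set.range q) := fun j =>
    hq1 (by rw [hS]; exact subset_convexHull ℝ _ ⟨j, rfl⟩)
  choose h h0 h1 h2 h3 using fun j => aux_hull q (s j) (hmem j)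
  have hMW : M.map ((↑) : ℚ → ℝ) = W * Matrix.of (fun k j => h j k) :=
    aux_mul (A.map ((↑) : ℚ → ℝ)) (fun i => (b i : ℝ)) q (fun j x => ((s j x : ℝ))) _
      h1 h2 W _ hW hM'
  refine ⟨Matrix.of (fun k j => h j k), fun k j => h0 j k, h1, hMW, ?_, ?_⟩
  · apply le_antisymm
    · have htop : affineSpan ℝ (Set.range fun j : Fin m => fun x => ((s j x : ℝ))) = ⊤ := by
        rw [← interior_convexHull_nonempty_iff_affineSpan_eq_top, ← hS]
        exact hSfull
      have hK : ∀ k, ∃ w : Fin m → ℝ, ∑ j, w j = 1 ∧ ∀ x, ∑ j, w j * (s j x : ℝ) = q k x := by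
        intro k
        have hk : q k ∈ affineSpan ℝ (Set.range fun j : Fin m => fun x => ((s j x : ℝ))) := by
          rw [htop]; exact AffineSubspace.mem_top ℝ _ _
        obtain ⟨w, hw, hwq⟩ := eq_affineCombination_of_mem_affineSpan_of_fintype hk
        rw [Finset.affineCombination_eq_linear_combination _ _ _ hw] at hwq
        refine ⟨w, hw, fun x => ?_⟩
        have := congrFun hwq x
        simpa using this.symm
      choose K hK1 hK2 using hK
      rw [aux_mul (A.map ((↑) : ℚ → ℝ)) (fun i => (b i : ℝ)) (fun j x => ((s j x : ℝ))) q
        (Matrix.of (fun j k => K k j)) hK1 hK2 (M.map ((↑) : ℚ → ℝ)) W hM' hW]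
      exact Matrix.rank_mul_le_left _ _
    · rw [hMW]
      exact Matrix.rank_mul_le_left _ _
  · intro hr
    refine ⟨?_, fun k j => h3 j hr k⟩
    intro i k
    choose c hc using hr
    refine ⟨A.mulVec (c k) i + b i, ?_⟩
    rw [hW]
    simp [Matrix.mulVec, dotProduct, hc]
end

section
/- Let r, n, m, d ∈ ℕ, A ∈ ℚ^{n×(r−1)}, b ∈ ℚ^n be such that P = {x ∈ ℝ^{r−1} : Ax + b ≥ 0} is bounded and the augmented matrix (A b) ∈ ℚ^{n×r} has rank r. Let s_1, …, s_m ∈ ℚ^{r−1} be points of P whose convex hull S is full-dimensional (i.e., has nonempty interior in ℝ^{r−1}), and define M ∈ ℚ^{n×m} by M^j = A s_j + b for each j. Suppose M = W·H where W ∈ ℝ_+^{n×d} has no zero column, H ∈ ℝ_+^{d×m}, and rank(W) = rank(M). Then there exist points q_1, …, q_d ∈ ℝ^{r−1} with S ⊆ conv{q_1, …, q_d} ⊆ P; moreover, if W and H are rational, the q_i can be taken rational. -/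
open Matrix Set

theorem aux_left {ℓ n : ℕ} (A : Matrix (Fin n) (Fin ℓ) ℚ) (b : Fin n → ℚ)
    (hrank : (Matrix.of fun i : Fin n => Fin.snoc (fun j => A i j) (b i) :
        Matrix (Fin n) (Fin (ℓ + 1)) ℚ).rank = ℓ + 1) :
    ∃ (L : Matrix (Fin ℓ) (Fin n) ℚ) (l : Fin n → ℚ),
      L * A = 1 ∧ L *ᵥ b = 0 ∧ l ᵥ* A = 0 ∧ l ⬝ᵥ b = 1 := by
  set B : Matrix (Fin n) (Fin (ℓ + 1)) ℚ :=
    Matrix.of fun i : Fin n => Fin.snoc (fun j => A i j) (b i) with hB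
  have hker : LinearMap.ker B.mulVecLin = ⊥ := by
    have h := LinearMap.finrank_range_add_finrank_ker B.mulVecLin
    have h2 : Module.finrank ℚ (LinearMap.range B.mulVecLin) = ℓ + 1 := hrank
    rw [h2] at h
    simp at h
    exact h
  obtain ⟨g, hg⟩ := LinearMap.exists_leftInverse_of_injective B.mulVecLin hker
  have hL : LinearMap.toMatrix' g * B = 1 := by
    have := congrArg LinearMap.toMatrix' hg
    rw [LinearMap.toMatrix'_comp, LinearMap.toMatrix'_id] at this
    rw [← Matrix.toLin'_apply', LinearMap.toMatrix'_toLin'] at this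
    exact this
  set G := LinearMap.toMatrix' g
  have hBc : ∀ i j, B i (Fin.castSucc j) = A i j := by intro i j; simp [hB]
  have hBl : ∀ i, B i (Fin.last ℓ) = b i := by intro i; simp [hB]
  refine ⟨Matrix.of fun i j => G i.castSucc j, fun j => G (Fin.last ℓ) j, ?_, ?_, ?_, ?_⟩
  · ext i j
    have := congrFun (congrFun hL i.castSucc) j.castSucc
    simp only [Matrix.mul_apply, hBc, Matrix.one_apply, Fin.castSucc_inj] at this
    simpa [Matrix.mul_apply, Matrix.one_apply] using this
  · ext i
    have := congrFun (congrFun hL i.castSucc) (Fin.last ℓ)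
    simp only [Matrix.mul_apply, hBl, Matrix.one_apply] at this
    simpa [Matrix.mulVec, dotProduct, (Fin.castSucc_lt_last i).ne] using this
  · ext j
    have := congrFun (congrFun hL (Fin.last ℓ)) j.castSucc
    simp only [Matrix.mul_apply, hBc, Matrix.one_apply] at this
    simpa [Matrix.vecMul, dotProduct, (Fin.castSucc_lt_last j).ne'] using this
  · have := congrFun (congrFun hL (Fin.last ℓ)) (Fin.last ℓ)
    simp only [Matrix.mul_apply, hBl, Matrix.one_apply] at this
    simpa [dotProduct] using this

theorem aux_left_real {ℓ n : ℕ} (A : Matrix (Fin n) (Fin ℓ) ℚ) (b : Fin n → ℚ)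
    (hrank : (Matrix.of fun i : Fin n => Fin.snoc (fun j => A i j) (b i) :
        Matrix (Fin n) (Fin (ℓ + 1)) ℚ).rank = ℓ + 1) :
    ∃ (L : Matrix (Fin ℓ) (Fin n) ℚ) (l : Fin n → ℚ), ∀ (x : Fin ℓ → ℝ) (t : ℝ),
      (L.map ((↑) : ℚ → ℝ)) *ᵥ ((A.map ((↑) : ℚ → ℝ)) *ᵥ x + t • (fun i => (b i : ℝ))) = x ∧
      (fun i => (l i : ℝ)) ⬝ᵥ
        ((A.map ((↑) : ℚ → ℝ)) *ᵥ x + t • (fun i => (b i : ℝ))) = t := by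
  obtain ⟨L, l, h1, h2, h3, h4⟩ := aux_left A b hrank
  refine ⟨L, l, fun x t => ?_⟩
  have h1' : (L.map ((↑) : ℚ → ℝ)) * (A.map ((↑) : ℚ → ℝ)) = 1 := by
    ext i j
    have := congrFun (congrFun h1 i) j
    have := congrArg ((↑) : ℚ → ℝ) this
    simp only [Matrix.mul_apply, Matrix.one_apply] at this
    push_cast at this
    simpa [Matrix.mul_apply, Matrix.one_apply, apply_ite ((↑) : ℚ → ℝ)] using this
  have h2' : (L.map ((↑) : ℚ → ℝ)) *ᵥ (fun i => (b i : ℝ)) = 0 := by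
    ext i
    have := congrArg ((↑) : ℚ → ℝ) (congrFun h2 i)
    simp only [Matrix.mulVec, dotProduct] at this
    push_cast at this
    simpa [Matrix.mulVec, dotProduct] using this
  have h3' : (fun i => (l i : ℝ)) ᵥ* (A.map ((↑) : ℚ → ℝ)) = 0 := by
    ext i
    have := congrArg ((↑) : ℚ → ℝ) (congrFun h3 i)
    simp only [Matrix.vecMul, dotProduct] at this
    push_cast at this
    simpa [Matrix.vecMul, dotProduct] using this
  have h4' : (fun i => (l i : ℝ)) ⬝ᵥ (fun i => (b i : ℝ)) = 1 := by
    have := congrArg ((↑) : ℚ → ℝ) h4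
    simp only [dotProduct] at this
    push_cast at this
    simpa [dotProduct] using this
  constructor
  · rw [Matrix.mulVec_add, Matrix.mulVec_smul, Matrix.mulVec_mulVec, h1', h2']; simp
  · rw [dotProduct_add, dotProduct_smul, Matrix.dotProduct_mulVec, h3', h4']; simp

theorem aux_dir {ℓ n : ℕ} (A : Matrix (Fin n) (Fin ℓ) ℝ) (b : Fin n → ℝ)
    (hb : Bornology.IsBounded {x : Fin ℓ → ℝ | ∀ i, 0 ≤ A.mulVec x i + b i})
    (s v : Fin ℓ → ℝ) (hs : ∀ i, 0 ≤ A.mulVec s i + b i) (hv : ∀ i, 0 ≤ A.mulVec v i) :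
    v = 0 := by
  by_contra hne
  obtain ⟨R, hR⟩ := hb.exists_norm_le
  have key : ∀ N : ℕ, (N : ℝ) * ‖v‖ ≤ R + ‖s‖ := by
    intro N
    have h1 : ‖s + (N : ℝ) • v‖ ≤ R := by
      apply hR
      intro i
      rw [Matrix.mulVec_add, Matrix.mulVec_smul]
      have := mul_nonneg (Nat.cast_nonneg (α := ℝ) N) (hv i)
      have := hs i
      simp only [Pi.add_apply, Pi.smul_apply, smul_eq_mul]
      linarith
    have h2 : ‖(N : ℝ) • v‖ ≤ ‖s + (N : ℝ) • v‖ + ‖s‖ := by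
      have := norm_sub_le (s + (N : ℝ) • v) s
      simpa using this
    rw [norm_smul, Real.norm_natCast] at h2
    linarith
  obtain ⟨N, hN⟩ := exists_nat_gt ((R + ‖s‖) / ‖v‖)
  have hp : 0 < ‖v‖ := norm_pos_iff.mpr hne
  rw [div_lt_iff₀ hp] at hN
  linarith [key N]

/-- Reduction from restricted NMF to the nested polytope problem: a restricted NMF
(with `W` having no zero column) determines points spanning a nested polytope,
preserving rationality.

Here `ℓ` plays the role of `r - 1`, so that the augmented matrix `(A b)` has `ℓ + 1 = r`
columns and full column rank `r`. -/
theorem stmt3 {ℓ n m d : ℕ}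
    (A : Matrix (Fin n) (Fin ℓ) ℚ) (b : Fin n → ℚ)
    -- the outer polytope `P = {x ∈ ℝ^ℓ | A x + b ≥ 0}`
    (P : Set (Fin ℓ → ℝ))
    (hP : P = {x : Fin ℓ → ℝ | ∀ i, 0 ≤ (A.map ((↑) : ℚ → ℝ)).mulVec x i + (b i : ℝ)})
    -- `P` is bounded (hence a polytope)
    (hPbdd : Bornology.IsBounded P)
    -- the augmented matrix `(A b)` has rank `ℓ + 1`, i.e. `P` is full-dimensional
    (hrank : (Matrix.of fun i : Fin n => Fin.snoc (fun j => A i j) (b i) :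
        Matrix (Fin n) (Fin (ℓ + 1)) ℚ).rank = ℓ + 1)
    -- rational points `s_1, …, s_m` of `P`
    (s : Fin m → Fin ℓ → ℚ)
    (hsP : ∀ j, (fun x => ((s j x : ℝ))) ∈ P)
    -- their convex hull `S` is full-dimensional
    (S : Set (Fin ℓ → ℝ))
    (hS : S = convexHull ℝ (Set.range fun j : Fin m => fun x => ((s j x : ℝ))))
    (hSfull : (interior S).Nonempty)
    -- the matrix `M` with columns `M^j = A s_j + b`
    (M : Matrix (Fin n) (Fin m) ℚ)
    (hM : ∀ j i, M i j = A.mulVec (s j) i + b i)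
    -- a restricted NMF `M = W · H` where `W` has no zero column
    (W : Matrix (Fin n) (Fin d) ℝ) (H : Matrix (Fin d) (Fin m) ℝ)
    (hWnn : ∀ i k, 0 ≤ W i k) (hHnn : ∀ k j, 0 ≤ H k j)
    (hWnz : ∀ k, ∃ i, W i k ≠ 0)
    (hfac : M.map ((↑) : ℚ → ℝ) = W * H)
    (hrkW : W.rank = (M.map ((↑) : ℚ → ℝ)).rank) :
    ∃ q : Fin d → Fin ℓ → ℝ,
      S ⊆ convexHull ℝ (Set.range q) ∧ convexHull ℝ (Set.range q) ⊆ P ∧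
      (((∀ i k, ∃ c : ℚ, W i k = (c : ℝ)) ∧ (∀ k j, ∃ c : ℚ, H k j = (c : ℝ))) →
        ∀ k x, ∃ c : ℚ, q k x = (c : ℝ)) := by
  obtain ⟨L, l, hL⟩ := aux_left_real A b hrank
  set AR := A.map ((↑) : ℚ → ℝ) with hAR
  set LR := L.map ((↑) : ℚ → ℝ) with hLR
  set bR : Fin n → ℝ := fun i => (b i : ℝ) with hbR
  set lR : Fin n → ℝ := fun i => (l i : ℝ) with hlR
  set MR := M.map ((↑) : ℚ → ℝ) with hMR
  set sR : Fin m → Fin ℓ → ℝ := fun j x => (s j x : ℝ) with hsR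
  have hMcol : ∀ j, MR.col j = AR *ᵥ sR j + bR := by
    intro j
    ext i
    simp only [hMR, Matrix.col_apply, Matrix.map_apply, hM, Pi.add_apply, Matrix.mulVec,
      dotProduct, hAR, hsR, hbR]
    push_cast
    rfl
  have hrange : LinearMap.range MR.mulVecLin = LinearMap.range W.mulVecLin := by
    apply Submodule.eq_of_le_of_finrank_eq
    · rw [hfac, Matrix.mulVecLin_mul]
      exact LinearMap.range_comp_le_range _ _
    · exact hrkW.symm
  have hcomb : ∀ k, ∃ (u : Fin ℓ → ℝ) (t : ℝ), W.col k = AR *ᵥ u + t • bR := by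
    intro k
    have h1 : W.col k ∈ LinearMap.range MR.mulVecLin := by
      rw [hrange]
      exact ⟨Pi.single k 1, by simp⟩
    obtain ⟨c, hc⟩ := h1
    refine ⟨∑ j, c j • sR j, ∑ j, c j, ?_⟩
    rw [← hc, Matrix.mulVecLin_apply, Matrix.mulVec_eq_sum]
    have : ∀ j, MRᵀ j = AR *ᵥ sR j + bR := hMcol
    simp only [this, Matrix.mulVec_sum, Matrix.mulVec_smul, Finset.sum_smul, smul_add,
      Finset.sum_add_distrib, op_smul_eq_smul]
  have hW : ∀ k, W.col k = AR *ᵥ (LR *ᵥ W.col k) + (lR ⬝ᵥ W.col k) • bR := by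
    intro k
    obtain ⟨u, t, h⟩ := hcomb k
    obtain ⟨h1, h2⟩ := hL u t
    rw [← h] at h1 h2
    rw [h1, h2]
    exact h
  set u : Fin d → Fin ℓ → ℝ := fun k => LR *ᵥ W.col k with hu
  set t : Fin d → ℝ := fun k => lR ⬝ᵥ W.col k with ht
  have hWi : ∀ k i, W i k = (AR *ᵥ u k) i + t k * bR i := fun k i => congrFun (hW k) i
  subst hP
  -- a point of `P`
  have hmne : Nonempty (Fin m) := by
    obtain ⟨x, hx⟩ := hSfull
    have hx := interior_subset hx
    rw [hS] at hx
    have := (convexHull_nonempty_iff (𝕜 := ℝ)).mp ⟨x, hx⟩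
    exact Set.range_nonempty_iff_nonempty.mp this
  obtain ⟨j0⟩ := hmne
  have hs0 : ∀ i, 0 ≤ (AR *ᵥ sR j0) i + bR i := hsP j0
  have htpos : ∀ k, 0 < t k := by
    intro k
    by_contra hneg
    push Not at hneg
    have hvi : ∀ i, (AR *ᵥ (u k - t k • sR j0)) i = W i k + (- t k) * ((AR *ᵥ sR j0) i + bR i) := by
      intro i
      rw [Matrix.mulVec_sub, Matrix.mulVec_smul, hWi k i]
      simp only [Pi.sub_apply, Pi.smul_apply, smul_eq_mul]
      ring
    have hpos : ∀ i, 0 ≤ (- t k) * ((AR *ᵥ sR j0) i + bR i) := fun i =>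
      mul_nonneg (by linarith) (hs0 i)
    have hv : u k - t k • sR j0 = 0 := by
      apply aux_dir AR bR hPbdd (sR j0) _ hs0
      intro i
      rw [hvi i]
      exact add_nonneg (hWnn i k) (hpos i)
    obtain ⟨i, hi⟩ := hWnz k
    have h := hvi i
    rw [hv, Matrix.mulVec_zero, Pi.zero_apply] at h
    have := hWnn i k
    have := hpos i
    exact hi (by linarith)
  have hsj : ∀ j, sR j = ∑ k, H k j • u k ∧ (1 : ℝ) = ∑ k, H k j * t k := by
    intro j
    have e : AR *ᵥ sR j + (1 : ℝ) • bR
        = AR *ᵥ (∑ k, H k j • u k) + (∑ k, H k j * t k) • bR := by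
      rw [one_smul, ← hMcol j, hfac]
      ext i
      rw [Matrix.mulVec_sum]
      simp only [Matrix.mulVec_smul, Matrix.col_apply, Matrix.mul_apply, Pi.add_apply,
        Finset.sum_apply, Pi.smul_apply, smul_eq_mul, hWi, Finset.sum_mul]
      rw [← Finset.sum_add_distrib]
      exact Finset.sum_congr rfl fun k _ => by ring
    have a := hL (sR j) 1
    have c := hL (∑ k, H k j • u k) (∑ k, H k j * t k)
    rw [e] at a
    exact ⟨a.1.symm.trans c.1, a.2.symm.trans c.2⟩
  refine ⟨fun k => (t k)⁻¹ • u k, ?_, ?_, ?_⟩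
  · rw [hS]
    apply convexHull_min _ (convex_convexHull ℝ _)
    rintro _ ⟨j, rfl⟩
    have h1 : sR j = ∑ k, (H k j * t k) • ((t k)⁻¹ • u k) := by
      rw [(hsj j).1]
      refine Finset.sum_congr rfl fun k _ => ?_
      rw [smul_smul, mul_assoc, mul_inv_cancel₀ (htpos k).ne', mul_one]
    change sR j ∈ _
    rw [h1]
    apply (convex_convexHull ℝ _).sum_mem
    · exact fun k _ => mul_nonneg (hHnn k j) (htpos k).le
    · exact (hsj j).2.symm
    · exact fun k _ => subset_convexHull ℝ _ ⟨k, rfl⟩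
  · apply convexHull_min
    · rintro _ ⟨k, rfl⟩ i
      have h1 : (AR *ᵥ ((t k)⁻¹ • u k)) i + bR i = (t k)⁻¹ * W i k := by
        rw [Matrix.mulVec_smul, hWi k i, mul_add, ← mul_assoc, inv_mul_cancel₀ (htpos k).ne']
        simp
      change 0 ≤ (AR *ᵥ ((t k)⁻¹ • u k)) i + bR i
      rw [h1]
      exact mul_nonneg (inv_nonneg.mpr (htpos k).le) (hWnn i k)
    · intro x hx y hy α β hα hβ hαβ i
      have h1 := mul_nonneg hα (hx i)
      have h2 := mul_nonneg hβ (hy i)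
      have h3 : (AR *ᵥ (α • x + β • y)) i + bR i
          = α * ((AR *ᵥ x) i + bR i) + β * ((AR *ᵥ y) i + bR i) := by
        rw [Matrix.mulVec_add, Matrix.mulVec_smul, Matrix.mulVec_smul]
        simp only [Pi.add_apply, Pi.smul_apply, smul_eq_mul]
        linear_combination (-bR i) * hαβ
      exact h3 ▸ add_nonneg h1 h2
  · rintro ⟨hWq, -⟩ k x
    choose w hw using hWq
    refine ⟨(∑ i, l i * w i k)⁻¹ * ∑ i, L x i * w i k, ?_⟩
    push_cast
    simp [hu, ht, hLR, hlR, Matrix.mulVec, dotProduct, hw]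
end

section
/- Let M ∈ ℚ_+^{n×m} be column-stochastic and let ℳ be the LMC constructed from M. Then rk(ℳ) = rank(M) + 2. -/
open Matrix

/-- Transition matrix of a labelled Markov chain extended to words:
`μ(σ₁…σ_k) = μ(σ₁) ⋯ μ(σ_k)`, with `μ(ε) = I`. -/
noncomputable def lmcWord {A S : Type} [Fintype S] [DecidableEq S]
    (μ : A → Matrix S S ℝ) (w : List A) : Matrix S S ℝ :=
  (w.map μ).prod

/-- Entry of the backward matrix: `(B_ℳ)_{i,w} = e_i^⊤ μ(w) 𝟙`. -/
noncomputable def lmcB {A S : Type} [Fintype S] [DecidableEq S]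
    (μ : A → Matrix S S ℝ) (i : S) (w : List A) : ℝ :=
  ∑ j, lmcWord μ w i j

/-- The rank of an LMC: the dimension of the span of the columns of its backward matrix. -/
noncomputable def lmcRank {A S : Type} [Fintype S] [DecidableEq S]
    (μ : A → Matrix S S ℝ) : ℕ :=
  Module.finrank ℝ
    (Submodule.span ℝ (Set.range fun w : List A => fun i : S => lmcB μ i w))

/-- The LMC constructed from a column-stochastic matrix `M ∈ ℝ_+^{n×m}`.
States: `Sum.inl ()` is state `0`, `Sum.inr (Sum.inl i)` is state `i ∈ [m]`,
and `Sum.inr (Sum.inr ())` is state `m+1`.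
Alphabet: `Sum.inl i` is `a_i`, `Sum.inr (Sum.inl j)` is `b_j`, `Sum.inr (Sum.inr ())` is `✓`.
Transitions: `μ(a_i)_{0,i} = 1/m`, `μ(b_j)_{i,m+1} = M_{j,i}`, `μ(✓)_{m+1,m+1} = 1`,
all other entries `0`. -/
noncomputable def lmcMu {n m : ℕ} (M : Matrix (Fin n) (Fin m) ℝ) :
    (Fin m ⊕ Fin n ⊕ Unit) →
      Matrix (Unit ⊕ Fin m ⊕ Unit) (Unit ⊕ Fin m ⊕ Unit) ℝ
  | Sum.inl i => Matrix.of fun p q =>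
      match p, q with
      | Sum.inl _, Sum.inr (Sum.inl i') => if i' = i then 1 / (m : ℝ) else 0
      | _, _ => 0
  | Sum.inr (Sum.inl j) => Matrix.of fun p q =>
      match p, q with
      | Sum.inr (Sum.inl i), Sum.inr (Sum.inr _) => M j i
      | _, _ => 0
  | Sum.inr (Sum.inr _) => Matrix.of fun p q =>
      match p, q with
      | Sum.inr (Sum.inr _), Sum.inr (Sum.inr _) => 1
      | _, _ => 0

theorem lmcB_nil_aux {A S : Type} [Fintype S] [DecidableEq S]
    (μ : A → Matrix S S ℝ) (i : S) : lmcB μ i [] = 1 := by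
  simp [lmcB, lmcWord, Matrix.one_apply]

theorem lmcB_cons_aux {A S : Type} [Fintype S] [DecidableEq S]
    (μ : A → Matrix S S ℝ) (a : A) (w : List A) (i : S) :
    lmcB μ i (a :: w) = ∑ k, μ a i k * lmcB μ k w := by
  simp only [lmcB, lmcWord, List.map_cons, List.prod_cons, Matrix.mul_apply, Finset.mul_sum]
  exact Finset.sum_comm

/-- Embedding of `R × ℝ × ℝ` into the state space. -/
def embAux {m : ℕ} (R : Submodule ℝ (Fin m → ℝ)) :
    (R × ℝ × ℝ) →ₗ[ℝ] (Unit ⊕ Fin m ⊕ Unit → ℝ) where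
  toFun p := Sum.elim (fun _ => p.2.1) (Sum.elim (p.1 : Fin m → ℝ) (fun _ => p.2.2))
  map_add' p q := by
    ext (_ | _ | _) <;> simp
  map_smul' c p := by
    ext (_ | _ | _) <;> simp

theorem embAux_inj {m : ℕ} (R : Submodule ℝ (Fin m → ℝ)) :
    Function.Injective (embAux R) := by
  rintro ⟨⟨r, hr⟩, x, y⟩ ⟨⟨r', hr'⟩, x', y'⟩ h
  have h1 := congrFun h (Sum.inl ())
  have h2 := fun i => congrFun h (Sum.inr (Sum.inl i))
  have h3 := congrFun h (Sum.inr (Sum.inr ()))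
  simp only [embAux, LinearMap.coe_mk, AddHom.coe_mk, Sum.elim_inl, Sum.elim_inr] at h1 h2 h3
  have h2' : r = r' := funext h2
  subst h1 h2' h3
  rfl

theorem mem_embAux {m : ℕ} (R : Submodule ℝ (Fin m → ℝ)) (v : Unit ⊕ Fin m ⊕ Unit → ℝ)
    (h : (fun i => v (Sum.inr (Sum.inl i))) ∈ R) : v ∈ LinearMap.range (embAux R) := by
  refine ⟨⟨⟨_, h⟩, v (Sum.inl ()), v (Sum.inr (Sum.inr ()))⟩, ?_⟩
  ext (_ | _ | _) <;> simp [embAux]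

theorem span_eq_aux {n m : ℕ} (hm : 0 < m) (M : Matrix (Fin n) (Fin m) ℝ)
    (hMcs : ∀ i : Fin m, ∑ j, M j i = 1) :
    Submodule.span ℝ (Set.range fun w : List (Fin m ⊕ Fin n ⊕ Unit) =>
      fun i : Unit ⊕ Fin m ⊕ Unit => lmcB (lmcMu M) i w) =
    LinearMap.range (embAux (Submodule.span ℝ (Set.range M.row))) := by
  apply le_antisymm
  · rw [Submodule.span_le]
    rintro _ ⟨w, rfl⟩
    apply mem_embAux
    cases w with
    | nil =>
      have : (fun i : Fin m => lmcB (lmcMu M) (Sum.inr (Sum.inl i)) []) = ∑ j, M.row j := by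
        ext i
        rw [lmcB_nil_aux, Finset.sum_apply]
        exact (hMcs i).symm
      simp only [this]
      exact Submodule.sum_mem _ fun j _ => Submodule.subset_span ⟨j, rfl⟩
    | cons a w =>
      simp only [lmcB_cons_aux]
      rcases a with a | b | c
      · convert Submodule.zero_mem _ using 1
        ext i
        simp [lmcMu]
      · convert Submodule.smul_mem _ (lmcB (lmcMu M) (Sum.inr (Sum.inr ())) w)
          (Submodule.subset_span (Set.mem_range_self (f := M.row) b)) using 1
        ext i
        simp [lmcMu, Matrix.row, mul_comm]
      · convert Submodule.zero_mem _ using 1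
        ext i
        simp [lmcMu]
  · set W := Submodule.span ℝ (Set.range fun w : List (Fin m ⊕ Fin n ⊕ Unit) =>
      fun i : Unit ⊕ Fin m ⊕ Unit => lmcB (lmcMu M) i w) with hW
    have hin : ∀ w, (fun i => lmcB (lmcMu M) i w) ∈ W :=
      fun w => Submodule.subset_span ⟨w, rfl⟩
    set R := Submodule.span ℝ (Set.range M.row) with hR
    have hm' : (m : ℝ) ≠ 0 := by positivity
    have h1 : embAux R (0, 1, 0) ∈ W := by
      convert W.smul_mem (m : ℝ) (hin [Sum.inl ⟨0, hm⟩]) using 1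
      ext (_ | _ | _) <;> simp [embAux, lmcB_cons_aux, lmcB_nil_aux, lmcMu, hm']
    have h2 : embAux R (0, 0, 1) ∈ W := by
      convert hin [Sum.inr (Sum.inr ())] using 1
      ext (_ | _ | _) <;> simp [embAux, lmcB_cons_aux, lmcB_nil_aux, lmcMu]
    have h3 : ∀ r (hr : r ∈ R), embAux R (⟨r, hr⟩, 0, 0) ∈ W := by
      intro r hr
      induction hr using Submodule.span_induction with
      | mem x hx =>
        obtain ⟨j, rfl⟩ := hx
        convert hin [Sum.inr (Sum.inl j)] using 1
        ext (_ | _ | _) <;> simp [embAux, lmcB_cons_aux, lmcB_nil_aux, lmcMu, Matrix.row]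
      | zero => 
        convert W.zero_mem using 1
        ext (_ | _ | _) <;> simp [embAux]
      | add x y hx hy ihx ihy =>
        convert W.add_mem ihx ihy using 1
        ext (_ | _ | _) <;> simp [embAux]
      | smul c x hx ih =>
        convert W.smul_mem c ih using 1
        ext (_ | _ | _) <;> simp [embAux]
    rintro _ ⟨⟨⟨r, hr⟩, x, y⟩, rfl⟩
    convert W.add_mem (h3 r hr) (W.add_mem (W.smul_mem x h1) (W.smul_mem y h2)) using 1
    ext (_ | _ | _) <;> simp [embAux]

/-- For a column-stochastic rational matrix `M ∈ ℚ_+^{n×m}`, the LMC `ℳ` constructed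
from `M` satisfies `rk(ℳ) = rank(M) + 2`. -/
theorem stmt5 {n m : ℕ} (hm : 0 < m) (M : Matrix (Fin n) (Fin m) ℚ)
    (hMnn : ∀ j i, 0 ≤ M j i) (hMcs : ∀ i : Fin m, ∑ j, M j i = 1) :
    lmcRank (lmcMu (M.map ((↑) : ℚ → ℝ))) = (M.map ((↑) : ℚ → ℝ)).rank + 2 := by
  unfold lmcRank
  rw [span_eq_aux hm, LinearMap.finrank_range_of_inj (embAux_inj _),
    Matrix.rank_eq_finrank_span_row]
  · simp
  · intro i
    have := hMcs i
    simp only [Matrix.map_apply]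
    exact_mod_cast this
end

section
/- Let M ∈ ℚ_+^{n×m} be a nonnegative rational matrix with rank(M) ≤ 3 and let d = rrk+(M). Then there exist nonnegative rational matrices W ∈ ℚ_+^{n×d} and H ∈ ℚ_+^{d×m} with M = W·H and rank(W) = rank(M). In particular, the restricted nonnegative ranks of M over ℝ and over ℚ coincide. -/
open Matrix

/-- The restricted nonnegative rank over `ℚ` of a rational matrix. -/
noncomputable def rrkPosQ {n m : ℕ} (M : Matrix (Fin n) (Fin m) ℚ) : ℕ :=
  sInf {d : ℕ | ∃ W : Matrix (Fin n) (Fin d) ℚ, ∃ H : Matrix (Fin d) (Fin m) ℚ,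
    (∀ i k, 0 ≤ W i k) ∧ (∀ k j, 0 ≤ H k j) ∧ M = W * H ∧ W.rank = M.rank}

open Filter Topology

def rc {r : ℕ} (q : Fin r → ℚ) : Fin r → ℝ := fun i => (q i : ℝ)
def IsRat {r : ℕ} (x : Fin r → ℝ) : Prop := ∃ (c : ℝ) (q : Fin r → ℚ), x = c • rc q
def InC {d r : ℕ} (w : Fin d → Fin r → ℝ) (x : Fin r → ℝ) : Prop :=
  ∃ c : Fin d → ℝ, (∀ k, 0 ≤ c k) ∧ x = ∑ k, c k • w k
def Sol {n m d r : ℕ} (l : Fin n → Fin r → ℚ) (v : Fin m → Fin r → ℚ)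
    (w : Fin d → Fin r → ℝ) : Prop :=
  (∀ i k, 0 ≤ rc (l i) ⬝ᵥ w k) ∧ ∀ j, InC w (rc (v j))
def Mx {n m d r : ℕ} (l : Fin n → Fin r → ℚ) (v : Fin m → Fin r → ℚ)
    (w : Fin d → Fin r → ℝ) : Prop :=
  Sol l v w ∧ ∀ w', Sol l v w' → (∀ k, IsRat (w k) → IsRat (w' k)) →
    ∀ k, IsRat (w' k) → IsRat (w k)

lemma exists_Mx {n m d r : ℕ} (l : Fin n → Fin r → ℚ) (v : Fin m → Fin r → ℚ)
    (w : Fin d → Fin r → ℝ) (h : Sol l v w) : ∃ w' : Fin d → Fin r → ℝ, Mx l v w' := by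
  classical
  let S : Set (Finset (Fin d)) :=
    {s | ∃ w : Fin d → Fin r → ℝ, Sol l v w ∧ s = Finset.univ.filter (fun k => IsRat (w k))}
  have hne : S.Nonempty := ⟨_, w, h, rfl⟩
  obtain ⟨s, hs⟩ := (Set.toFinite S).exists_maximal hne
  obtain ⟨w1, hw1, rfl⟩ := hs.1
  refine ⟨w1, hw1, fun w' hw' hsub k hk => ?_⟩
  have := hs.2 (y := Finset.univ.filter (fun k => IsRat (w' k))) ⟨w', hw', rfl⟩
    (by intro k hk; simp at hk ⊢; exact hsub k hk)
  have := this (x := k) (by simpa using hk)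
  simpa using this

lemma InC.trans {d e r : ℕ} {w : Fin d → Fin r → ℝ} {w' : Fin e → Fin r → ℝ} {x : Fin r → ℝ}
    (h : InC w x) (hw : ∀ k, InC w' (w k)) : InC w' x := by
  obtain ⟨c, hc, rfl⟩ := h
  choose b hb hb' using hw
  refine ⟨fun j => ∑ k, c k * b k j, fun j => Finset.sum_nonneg fun k _ => mul_nonneg (hc k) (hb k j), ?_⟩
  conv_lhs => enter [2, k]; rw [hb' k]
  simp_rw [Finset.smul_sum, Finset.sum_smul, mul_smul]
  rw [Finset.sum_comm]

lemma InC.self {d r : ℕ} (w : Fin d → Fin r → ℝ) (k : Fin d) : InC w (w k) := by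
  classical
  refine ⟨Pi.single k 1, fun i => ?_, ?_⟩
  · by_cases h : i = k
    · subst h; simp
    · simp [h]
  · rw [Finset.sum_eq_single k] <;> simp +contextual

lemma InC.smul {d r : ℕ} {w : Fin d → Fin r → ℝ} {x : Fin r → ℝ} (h : InC w x) {a : ℝ} (ha : 0 ≤ a) :
    InC w (a • x) := by
  obtain ⟨c, hc, rfl⟩ := h
  exact ⟨fun k => a * c k, fun k => mul_nonneg ha (hc k), by simp [Finset.smul_sum, mul_smul]⟩

lemma InC.add {d r : ℕ} {w : Fin d → Fin r → ℝ} {x y : Fin r → ℝ} (h : InC w x) (h' : InC w y) :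
    InC w (x + y) := by
  obtain ⟨c, hc, rfl⟩ := h
  obtain ⟨c', hc', rfl⟩ := h'
  exact ⟨fun k => c k + c' k, fun k => add_nonneg (hc k) (hc' k), by
    simp [Finset.sum_add_distrib, add_smul]⟩

lemma InC.zero {d r : ℕ} (w : Fin d → Fin r → ℝ) : InC w 0 := ⟨0, by simp, by simp⟩

lemma InC.sum {d r : ℕ} {ι : Type*} (s : Finset ι) {w : Fin d → Fin r → ℝ} {x : ι → Fin r → ℝ}
    (h : ∀ i ∈ s, InC w (x i)) : InC w (∑ i ∈ s, x i) := by
  classical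
  induction s using Finset.induction_on with
  | empty => simpa using InC.zero w
  | insert a s ha ih =>
    rw [Finset.sum_insert ha]
    exact (h a (by simp)).add (ih fun i hi => h i (by simp [hi]))

/-- replacing a single vector -/
lemma Mx.update {n m d r : ℕ} {l : Fin n → Fin r → ℚ} {v : Fin m → Fin r → ℚ}
    {w : Fin d → Fin r → ℝ} (h : Mx l v w) {k : Fin d} (hk : ¬ IsRat (w k)) (x : Fin r → ℝ)
    (hx : IsRat x) (hl : ∀ i, 0 ≤ rc (l i) ⬝ᵥ x)
    (hc : InC (Function.update w k x) (w k)) : False := by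
  classical
  apply hk
  refine h.2 (Function.update w k x) ⟨fun i k' => ?_, fun j => (h.1.2 j).trans fun k' => ?_⟩ ?_ k (by simpa using hx)
  · by_cases hkk : k' = k
    · subst hkk; simpa using hl i
    · simpa [hkk] using h.1.1 i k'
  · by_cases hkk : k' = k
    · subst hkk; exact hc
    · have := InC.self (Function.update w k x) k'
      simpa [hkk] using this
  · intro k' hk'
    by_cases hkk : k' = k
    · subst hkk; simpa using hx
    · simpa [hkk] using hk'

lemma isRat_zero {r : ℕ} : IsRat (0 : Fin r → ℝ) := ⟨0, 0, by simp⟩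

lemma Mx.not_redundant {n m d r : ℕ} {l : Fin n → Fin r → ℚ} {v : Fin m → Fin r → ℚ}
    {w : Fin d → Fin r → ℝ} (h : Mx l v w) {k : Fin d} (hk : ¬ IsRat (w k))
    {a b : Fin d} (ha : a ≠ k) (hb : b ≠ k) {x y : ℝ} (hx : 0 ≤ x) (hy : 0 ≤ y)
    (e : w k = x • w a + y • w b) : False := by
  classical
  refine h.update hk 0 isRat_zero (by simp) ?_
  rw [e]
  have h1 := InC.self (Function.update w k 0) a
  have h2 := InC.self (Function.update w k 0) b
  simp only [Function.update_of_ne ha, Function.update_of_ne hb] at h1 h2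
  exact (h1.smul hx).add (h2.smul hy)

lemma cont_dot {r : ℕ} (a : Fin r → ℝ) : Continuous fun x : Fin r → ℝ => a ⬝ᵥ x := by
  simp only [dotProduct]; fun_prop

lemma dense_rc {r : ℕ} (U : Set (Fin r → ℝ)) (hU : IsOpen U) (x) (hx : x ∈ U) :
    ∃ q : Fin r → ℚ, rc q ∈ U := by
  have hd : DenseRange (fun q : Fin r → ℚ => rc q) := by
    have := DenseRange.piMap (ι := Fin r) (f := fun _ => ((↑) : ℚ → ℝ)) (fun _ => Rat.denseRange_cast)
    exact this
  exact hd.exists_mem_open hU ⟨x, hx⟩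

/-- irrational vectors lie on the boundary -/
lemma Mx.boundary {n m d r : ℕ} {l : Fin n → Fin r → ℚ} {v : Fin m → Fin r → ℚ}
    {w : Fin d → Fin r → ℝ} (h : Mx l v w)
    (hs : ∀ x : Fin r → ℝ, ∃ c : Fin m → ℝ, x = ∑ j, c j • rc (v j))
    {k : Fin d} (hk : ¬ IsRat (w k)) : ∃ i, l i ≠ 0 ∧ rc (l i) ⬝ᵥ w k = 0 := by
  classical
  by_contra hcon
  push Not at hcon
  -- linear section
  let Φ : (Fin d → ℝ) →ₗ[ℝ] (Fin r → ℝ) := Fintype.linearCombination ℝ w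
  have hΦ : Function.Surjective Φ := by
    intro x
    obtain ⟨c, rfl⟩ := hs x
    choose b hb hb' using h.1.2
    refine ⟨∑ j, c j • b j, ?_⟩
    rw [map_sum]
    refine Finset.sum_congr rfl fun j _ => ?_
    rw [map_smul, hb' j]
    rfl
  obtain ⟨s, hs'⟩ := Φ.exists_rightInverse_of_surjective (LinearMap.range_eq_top.2 hΦ)
  have hsc : Continuous s := s.continuous_of_finiteDimensional
  have hsx : ∀ x, ∑ i, s x i • w i = x := fun x => by
    have := LinearMap.congr_fun hs' x
    simpa [Φ, Fintype.linearCombination_apply] using this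
  -- choose eps
  let p : ℝ → Fin r → ℝ := fun ε => w k - ε • ∑ i, w i
  have hp : Continuous p := by fun_prop
  let V : Set (Fin r → ℝ) := {x | ∀ i, l i ≠ 0 → 0 < rc (l i) ⬝ᵥ x}
  have hV : IsOpen V := by
    simp only [V, Set.ofPred_forall]
    refine isOpen_iInter_of_finite fun i => isOpen_iInter_of_finite fun _ => ?_
    exact isOpen_lt continuous_const (cont_dot _)
  have hwV : w k ∈ V := fun i hi => lt_of_le_of_ne (h.1.1 i k) (Ne.symm (hcon i hi))
  have h1 : ∀ᶠ ε in 𝓝[>] (0:ℝ), p ε ∈ V :=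
    (hp.continuousAt.eventually (hV.mem_nhds (by simpa [p] using hwV))).filter_mono nhdsWithin_le_nhds
  have h2 : ∀ᶠ ε in 𝓝[>] (0:ℝ), ε < 1/2 :=
    (eventually_lt_nhds (by norm_num)).filter_mono nhdsWithin_le_nhds
  obtain ⟨ε, ⟨hε1, hε2⟩, hε0⟩ := ((h1.and h2).and self_mem_nhdsWithin).exists
  have hε0 : 0 < ε := hε0
  let U : Set (Fin r → ℝ) := V ∩ {x | ∀ i, s (x - p ε) i < ε ∧ - (1/4) < s (x - p ε) k}
  have hU : IsOpen U := by
    refine hV.inter ?_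
    simp only [Set.ofPred_forall]
    refine isOpen_iInter_of_finite fun i => IsOpen.inter
      (s := {x | s (x - p ε) i < ε}) (t := {x | - (1/4) < s (x - p ε) k}) ?_ ?_
    · exact isOpen_lt (by fun_prop) continuous_const
    · exact isOpen_lt continuous_const (by fun_prop)
  obtain ⟨q, hq⟩ := dense_rc U hU (p ε) ⟨hε1, fun i => by simp [hε0]⟩
  refine h.update hk (rc q) ⟨1, q, by simp⟩ (fun i => ?_) ?_
  · by_cases hi : l i = 0
    · simp [hi, rc, dotProduct]
    · exact (hq.1 i hi).le
  · set δ := s (rc q - p ε) with hδ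
    have e1 : rc q - p ε = ∑ i, δ i • w i := (hsx _).symm
    have e2 : (1 - ε + δ k) • w k = rc q + ∑ i ∈ Finset.univ.erase k, (ε - δ i) • w i := by
      have e3 : rc q = w k + ∑ i, (δ i - ε) • w i := by
        simp only [sub_smul, Finset.sum_sub_distrib, ← Finset.smul_sum]
        rw [← e1]; simp only [p]; abel
      rw [e3, ← Finset.add_sum_erase _ _ (Finset.mem_univ k), add_assoc, add_assoc,
        ← Finset.sum_add_distrib, Finset.sum_eq_zero (s := Finset.univ.erase k)]
      · simp only [sub_smul, add_smul, one_smul]; abel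
      · intro i _
        rw [← add_smul]; simp
    have hpos : 0 < 1 - ε + δ k := by have := (hq.2 k).2; change -(1/4) < δ k at this; linarith
    have e4 : w k = (1 - ε + δ k)⁻¹ • (rc q + ∑ i ∈ Finset.univ.erase k, (ε - δ i) • w i) := by
      rw [← e2, smul_smul, inv_mul_cancel₀ hpos.ne', one_smul]
    have h5 : InC (Function.update w k (rc q)) (rc q) := by
      have := InC.self (Function.update w k (rc q)) k
      simpa using this
    have h6 : InC (Function.update w k (rc q)) (∑ i ∈ Finset.univ.erase k, (ε - δ i) • w i) := by
      refine InC.sum _ fun i hi => InC.smul ?_ ?_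
      · have := InC.self (Function.update w k (rc q)) i
        simpa [Finset.ne_of_mem_erase hi] using this
      · have := (hq.2 i).1; change δ i < ε at this; linarith
    have := (h5.add h6).smul (inv_nonneg.2 hpos.le)
    rw [← e4] at this
    exact this

lemma carath {d r : ℕ} {w : Fin d → Fin r → ℝ} {x : Fin r → ℝ} (h : InC w x) :
    ∃ c : Fin d → ℝ, (∀ k, 0 ≤ c k) ∧ x = ∑ k, c k • w k ∧
      ∀ g : Fin d → ℝ, (∀ k, c k = 0 → g k = 0) → ∑ k, g k • w k = 0 → g = 0 := by
  classical
  let P : ℕ → Prop := fun N => ∃ c : Fin d → ℝ, (∀ k, 0 ≤ c k) ∧ x = ∑ k, c k • w k ∧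
    (Finset.univ.filter fun k => c k ≠ 0).card = N
  have hP : ∃ N, P N := by
    obtain ⟨c, h1, h2⟩ := h
    exact ⟨_, c, h1, h2, rfl⟩
  obtain ⟨c, h1, h2, h3⟩ := Nat.find_spec hP
  refine ⟨c, h1, h2, ?_⟩
  by_contra hcon
  push Not at hcon
  obtain ⟨g, hg1, hg2, hg3⟩ := hcon
  have key : ∃ g : Fin d → ℝ, (∀ k, c k = 0 → g k = 0) ∧ ∑ k, g k • w k = 0 ∧ ∃ k, 0 < g k := by
    obtain ⟨k, hk⟩ := Function.ne_iff.1 hg3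
    rcases lt_or_gt_of_ne hk with hk | hk
    · exact ⟨fun k => - g k, fun k hk => by simp [hg1 k hk], by simp [hg2], k, by simpa using hk⟩
    · exact ⟨g, hg1, hg2, k, hk⟩
  clear hg1 hg2 hg3 g
  obtain ⟨g, hg1, hg2, k0, hk0⟩ := key
  obtain ⟨k1, hk1, hmin⟩ := Finset.exists_min_image (Finset.univ.filter fun k => 0 < g k)
    (fun k => c k / g k) ⟨k0, by simpa using hk0⟩
  simp only [Finset.mem_filter, Finset.mem_univ, true_and] at hk1 hmin
  set t := c k1 / g k1 with ht
  have ht0 : 0 ≤ t := div_nonneg (h1 _) hk1.le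
  have : P (Finset.univ.filter fun k => c k - t * g k ≠ 0).card := by
    refine ⟨fun k => c k - t * g k, fun k => ?_, ?_, rfl⟩
    · rcases lt_or_ge 0 (g k) with hk | hk
      · have := hmin k hk
        rw [le_div_iff₀ hk] at this
        linarith
      · have := mul_nonneg ht0 (neg_nonneg.2 hk)
        have := h1 k
        linarith
    · simp only [sub_smul, mul_smul, Finset.sum_sub_distrib, ← Finset.smul_sum, hg2]
      simpa using h2
  have hle := Nat.find_min' hP this
  rw [← h3] at hle
  refine absurd hle (not_le.2 (Finset.card_lt_card ?_))
  refine (Finset.ssubset_iff_of_subset ?_).2 ⟨k1, ?_, ?_⟩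
  · intro k
    simp only [Finset.mem_filter, Finset.mem_univ, true_and]
    intro hk hc
    exact hk (by simp [hc, hg1 k hc])
  · simp only [Finset.mem_filter, Finset.mem_univ, true_and]
    intro hc
    rw [hg1 k1 hc] at hk1
    exact lt_irrefl _ hk1
  · simp [ht, hk1.ne']

lemma rational_out {n m d r : ℕ} {l : Fin n → Fin r → ℚ} {v : Fin m → Fin r → ℚ}
    {w : Fin d → Fin r → ℝ} (h : Sol l v w) (hr : ∀ k, IsRat (w k)) :
    ∃ (q : Fin d → Fin r → ℚ) (H : Fin d → Fin m → ℚ), (∀ i k, 0 ≤ l i ⬝ᵥ q k) ∧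
      (∀ k j, 0 ≤ H k j) ∧ ∀ j, v j = ∑ k, H k j • q k := by
  have h1 : ∀ k, ∃ (a : ℝ) (q : Fin r → ℚ), 0 ≤ a ∧ w k = a • rc q ∧ (a = 0 → q = 0) := by
    intro k
    obtain ⟨c, q, hc⟩ := hr k
    rcases lt_trichotomy c 0 with h0 | h0 | h0
    · refine ⟨-c, -q, by linarith, ?_, fun h => by linarith⟩
      rw [hc]; ext i; simp [rc]
    · exact ⟨0, 0, le_rfl, by simp [hc, h0], fun _ => rfl⟩
    · exact ⟨c, q, h0.le, hc, fun h => by linarith⟩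
  choose a q ha haq ha0 using h1
  obtain ⟨φ, hφ⟩ := (Algebra.linearMap ℚ ℝ).exists_leftInverse_of_injective
    (LinearMap.ker_eq_bot.2 (algebraMap ℚ ℝ).injective)
  have hφ1 : ∀ x : ℚ, φ (x : ℝ) = x := fun x => by
    simpa using LinearMap.congr_fun hφ x
  have h2 : ∀ j, ∃ H : Fin d → ℚ, (∀ k, 0 ≤ H k) ∧ v j = ∑ k, H k • q k := by
    intro j
    have h3 : InC (fun k => rc (q k)) (rc (v j)) := by
      refine (h.2 j).trans fun k => ?_
      rw [haq k]
      exact (InC.self (fun k => rc (q k)) k).smul (ha k)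
    obtain ⟨c, hc1, hc2, hc3⟩ := carath h3
    have e1 : v j = ∑ k, φ (c k) • q k := by
      ext i
      have := congrArg φ (congrFun hc2 i)
      simp only [rc, Finset.sum_apply, Pi.smul_apply, smul_eq_mul, map_sum, hφ1] at this
      rw [this]
      simp only [Finset.sum_apply, Pi.smul_apply, smul_eq_mul]
      refine Finset.sum_congr rfl fun k _ => ?_
      have := φ.map_smul (q k i) (c k)
      rw [Rat.smul_def, mul_comm] at this
      rw [this]; simp [mul_comm]
    have e2 := hc3 (fun k => c k - (φ (c k) : ℝ)) (fun k hk => by simp [hk]) (by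
      simp only [sub_smul, Finset.sum_sub_distrib]
      rw [← hc2, e1]
      ext i; simp [rc])
    refine ⟨fun k => φ (c k), fun k => ?_, e1⟩
    have := congrFun e2 k
    simp only [Pi.zero_apply] at this
    have h4 := hc1 k
    rw [sub_eq_zero.1 this] at h4
    exact_mod_cast h4
  choose H hH1 hH2 using h2
  refine ⟨q, fun k j => H j k, fun i k => ?_, fun k j => hH1 j k, hH2⟩
  have h5 := h.1 i k
  rcases (ha k).eq_or_lt with h6 | h6
  · simp [ha0 k h6.symm]
  · rw [haq k, dotProduct_smul, smul_eq_mul] at h5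
    have h7 := nonneg_of_mul_nonneg_right h5 h6
    have : rc (l i) ⬝ᵥ rc (q k) = ((l i ⬝ᵥ q k : ℚ) : ℝ) := by simp [rc, dotProduct]
    rw [this] at h7
    exact_mod_cast h7

def det3 (x y z : Fin 3 → ℝ) : ℝ :=
  x 0 * (y 1 * z 2 - y 2 * z 1) - x 1 * (y 0 * z 2 - y 2 * z 0) + x 2 * (y 0 * z 1 - y 1 * z 0)

def Par (a b : Fin 3 → ℝ) : Prop :=
  a 0 * b 1 = a 1 * b 0 ∧ a 0 * b 2 = a 2 * b 0 ∧ a 1 * b 2 = a 2 * b 1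

lemma Par.symm {a b : Fin 3 → ℝ} (h : Par a b) : Par b a := by
  obtain ⟨h1, h2, h3⟩ := h
  exact ⟨by linarith, by linarith, by linarith⟩

lemma Par.exists_smul {a b : Fin 3 → ℝ} (h : Par a b) (ha : a ≠ 0) : ∃ s : ℝ, b = s • a := by
  obtain ⟨h1, h2, h3⟩ := h
  obtain ⟨i, hi⟩ := Function.ne_iff.1 ha
  simp only [Pi.zero_apply] at hi
  refine ⟨b i / a i, ?_⟩
  ext j
  simp only [Pi.smul_apply, smul_eq_mul]
  rw [div_mul_eq_mul_div, eq_div_iff hi]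
  fin_cases i <;> fin_cases j <;> simp <;> linarith

lemma par_smul (a : Fin 3 → ℝ) (x y : ℝ) : Par (x • a) (y • a) := by
  refine ⟨?_, ?_, ?_⟩ <;> simp <;> ring

lemma det3_zero_span {a b c : Fin 3 → ℝ} (h : det3 a b c = 0) (hab : ¬ Par a b) :
    ∃ x y : ℝ, c = x • a + y • b := by
  unfold det3 at h
  by_cases h1 : a 0 * b 1 - a 1 * b 0 = 0
  · by_cases h2 : a 0 * b 2 - a 2 * b 0 = 0
    · by_cases h3 : a 1 * b 2 - a 2 * b 1 = 0
      · exact absurd ⟨by linarith, by linarith, by linarith⟩ hab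
      · refine ⟨(c 1 * b 2 - c 2 * b 1) / (a 1 * b 2 - a 2 * b 1),
          (a 1 * c 2 - a 2 * c 1) / (a 1 * b 2 - a 2 * b 1), ?_⟩
        ext i
        simp only [Pi.add_apply, Pi.smul_apply, smul_eq_mul]
        rw [div_mul_eq_mul_div, div_mul_eq_mul_div, ← add_div, eq_div_iff h3]
        fin_cases i <;> simp <;> first | ring1 | linear_combination h | linear_combination -h
    · refine ⟨(c 0 * b 2 - c 2 * b 0) / (a 0 * b 2 - a 2 * b 0),
          (a 0 * c 2 - a 2 * c 0) / (a 0 * b 2 - a 2 * b 0), ?_⟩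
      ext i
      simp only [Pi.add_apply, Pi.smul_apply, smul_eq_mul]
      rw [div_mul_eq_mul_div, div_mul_eq_mul_div, ← add_div, eq_div_iff h2]
      fin_cases i <;> simp <;> first | ring1 | linear_combination h | linear_combination -h
  · refine ⟨(c 0 * b 1 - c 1 * b 0) / (a 0 * b 1 - a 1 * b 0),
          (a 0 * c 1 - a 1 * c 0) / (a 0 * b 1 - a 1 * b 0), ?_⟩
    ext i
    simp only [Pi.add_apply, Pi.smul_apply, smul_eq_mul]
    rw [div_mul_eq_mul_div, div_mul_eq_mul_div, ← add_div, eq_div_iff h1]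
    fin_cases i <;> simp <;> first | ring1 | linear_combination h | linear_combination -h

lemma IsRat.of_smul {r : ℕ} {x : Fin r → ℝ} {c : ℝ} (hc : c ≠ 0) (h : IsRat (c • x)) : IsRat x := by
  obtain ⟨b, q, h⟩ := h
  refine ⟨c⁻¹ * b, q, ?_⟩
  rw [mul_smul, ← h, smul_smul, inv_mul_cancel₀ hc, one_smul]

lemma IsRat.smul {r : ℕ} {x : Fin r → ℝ} (h : IsRat x) (c : ℝ) : IsRat (c • x) := by
  obtain ⟨b, q, rfl⟩ := h
  exact ⟨c * b, q, by rw [mul_smul]⟩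

lemma isRat_rc {r : ℕ} (q : Fin r → ℚ) : IsRat (rc q) := ⟨1, q, by simp⟩

lemma rc_dot {r : ℕ} (a b : Fin r → ℚ) : rc a ⬝ᵥ rc b = ((a ⬝ᵥ b : ℚ) : ℝ) := by
  simp [rc, dotProduct]

lemma rc_add {r : ℕ} (a b : Fin r → ℚ) : rc (a + b) = rc a + rc b := by
  ext i; simp [rc]

lemma rc_smul {r : ℕ} (c : ℚ) (b : Fin r → ℚ) : rc (c • b) = (c : ℝ) • rc b := by
  ext i; simp [rc]

lemma rc_sub {r : ℕ} (a b : Fin r → ℚ) : rc (a - b) = rc a - rc b := by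
  ext i; simp [rc]

lemma rc_neg {r : ℕ} (a : Fin r → ℚ) : rc (-a) = - rc a := by
  ext i; simp [rc]

lemma dot3 (a b : Fin 3 → ℝ) : a ⬝ᵥ b = a 0 * b 0 + a 1 * b 1 + a 2 * b 2 := by
  simp [dotProduct, Fin.sum_univ_three]

lemma plane_basis (n : Fin 3 → ℚ) (hn : n ≠ 0) : ∃ u1 u2 : Fin 3 → ℚ,
    rc n ⬝ᵥ rc u1 = 0 ∧ rc n ⬝ᵥ rc u2 = 0 ∧
    (∃ κ : ℝ, κ ≠ 0 ∧ ∀ x, det3 (rc u1) (rc u2) x = κ * (rc n ⬝ᵥ x)) ∧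
    ∀ x, rc n ⬝ᵥ x = 0 → ∃ α β : ℝ, x = α • rc u1 + β • rc u2 := by
  obtain ⟨i, hi⟩ := Function.ne_iff.1 hn
  have hi' : (n i : ℝ) ≠ 0 := by simpa using hi
  fin_cases i
  · refine ⟨![-n 1, n 0, 0], ![-n 2, 0, n 0], ?_, ?_, ⟨n 0, hi', fun x => ?_⟩, fun x hx => ?_⟩
    · rw [dot3]; simp [rc]; ring
    · rw [dot3]; simp [rc]; ring
    · rw [dot3]; simp [rc, det3]; ring
    · rw [dot3] at hx
      simp [rc] at hx hi'
      refine ⟨x 1 / n 0, x 2 / n 0, ?_⟩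
      ext j
      fin_cases j <;> simp [rc] <;> field_simp
      linear_combination hx
  · refine ⟨![0, -n 2, n 1], ![n 1, -n 0, 0], ?_, ?_, ⟨n 1, hi', fun x => ?_⟩, fun x hx => ?_⟩
    · rw [dot3]; simp [rc]; ring
    · rw [dot3]; simp [rc]; ring
    · rw [dot3]; simp [rc, det3]; ring
    · rw [dot3] at hx
      simp [rc] at hx hi'
      refine ⟨x 2 / n 1, x 0 / n 1, ?_⟩
      ext j
      fin_cases j <;> simp [rc] <;> field_simp
      linear_combination hx
  · refine ⟨![n 2, 0, -n 0], ![0, n 2, -n 1], ?_, ?_, ⟨n 2, hi', fun x => ?_⟩, fun x hx => ?_⟩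
    · rw [dot3]; simp [rc]; ring
    · rw [dot3]; simp [rc]; ring
    · rw [dot3]; simp [rc, det3]; ring
    · rw [dot3] at hx
      simp [rc] at hx hi'
      refine ⟨x 0 / n 2, x 1 / n 2, ?_⟩
      ext j
      fin_cases j <;> simp [rc] <;> field_simp
      linear_combination hx

lemma facet (n : Fin 3 → ℚ) (hn : n ≠ 0) (w : Fin 3 → ℝ) (hw : ¬ IsRat w) (h0 : rc n ⬝ᵥ w = 0) :
    ∃ (u1 u2 : Fin 3 → ℚ) (a t : ℝ), 0 < a ∧ Irrational t ∧ w = a • (rc u1 + t • rc u2) ∧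
    rc n ⬝ᵥ rc u1 = 0 ∧ rc n ⬝ᵥ rc u2 = 0 ∧
    (∃ κ : ℝ, κ ≠ 0 ∧ ∀ x, det3 (rc u1) (rc u2) x = κ * (rc n ⬝ᵥ x)) ∧
    ∀ x, rc n ⬝ᵥ x = 0 → ∃ α β : ℝ, x = α • rc u1 + β • rc u2 := by
  obtain ⟨u1, u2, h1, h2, ⟨κ, hκ, h3⟩, h4⟩ := plane_basis n hn
  obtain ⟨α, β, e⟩ := h4 w h0
  have hα : α ≠ 0 := by
    rintro rfl
    exact hw ⟨β, u2, by simpa using e⟩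
  have e' : w = α • (rc u1 + (β / α) • rc u2) := by
    rw [e, smul_add, smul_smul]; field_simp
  have ht : Irrational (β / α) := by
    rintro ⟨q, hq⟩
    refine hw ⟨α, u1 + q • u2, ?_⟩
    rw [e', ← hq, rc_add, rc_smul]
  rcases lt_or_gt_of_ne hα with hα | hα
  · refine ⟨-u1, -u2, -α, β / α, by linarith, ht, ?_, by simp [rc_neg, h1], by simp [rc_neg, h2],
      ⟨κ, hκ, fun x => ?_⟩, fun x hx => ?_⟩
    · conv_lhs => rw [e']
      rw [rc_neg, rc_neg]; simp only [neg_smul, smul_neg, smul_add, neg_neg]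
    · rw [← h3]; simp [det3, rc]; ring
    · obtain ⟨α', β', h⟩ := h4 x hx
      exact ⟨-α', -β', by rw [h, rc_neg, rc_neg]; simp⟩
  · exact ⟨u1, u2, α, β / α, hα, ht, e', h1, h2, ⟨κ, hκ, h3⟩, h4⟩

lemma irr_lin {A B : ℚ} {t : ℝ} (ht : Irrational t) (h : (A : ℝ) + t * B = 0) : A = 0 ∧ B = 0 := by
  have hB : B = 0 := by
    by_contra hB
    have hB' : (B : ℝ) ≠ 0 := by exact_mod_cast hB
    refine ht ⟨-A / B, ?_⟩
    push_cast
    field_simp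
    linarith
  subst hB
  simp at h
  exact ⟨h, rfl⟩

lemma forms_prop {n l : Fin 3 → ℚ} (hn : n ≠ 0) {w : Fin 3 → ℝ} (hw : ¬ IsRat w)
    (h0 : rc n ⬝ᵥ w = 0) (h1 : rc l ⬝ᵥ w = 0) (x : Fin 3 → ℝ) (hx : rc n ⬝ᵥ x = 0) :
    rc l ⬝ᵥ x = 0 := by
  obtain ⟨u1, u2, a, t, ha, ht, e, -, -, -, h4⟩ := facet n hn w hw h0
  have : ((l ⬝ᵥ u1 : ℚ) : ℝ) + t * ((l ⬝ᵥ u2 : ℚ) : ℝ) = 0 := by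
    rw [e, dotProduct_smul, dotProduct_add, dotProduct_smul, rc_dot, rc_dot] at h1
    simpa [ha.ne'] using h1
  obtain ⟨h5, h6⟩ := irr_lin ht this
  obtain ⟨α, β, rfl⟩ := h4 x hx
  rw [dotProduct_add, dotProduct_smul, dotProduct_smul, rc_dot, rc_dot, h5, h6]
  simp

lemma rat_side {σ t0 : ℝ} (hσ : σ ≠ 0) {p : ℝ → Prop} (h : ∀ᶠ t in 𝓝 t0, p t) :
    ∃ q : ℚ, p q ∧ 0 < σ * ((q : ℝ) - t0) := by
  obtain ⟨ε, hε, hb⟩ := Metric.eventually_nhds_iff.1 h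
  rcases lt_or_gt_of_ne hσ with hσ | hσ
  · obtain ⟨q, h1, h2⟩ := exists_rat_btwn (show t0 - ε < t0 by linarith)
    refine ⟨q, hb ?_, mul_pos_of_neg_of_neg hσ (by linarith)⟩
    rw [Real.dist_eq, abs_lt]; constructor <;> linarith
  · obtain ⟨q, h1, h2⟩ := exists_rat_btwn (show t0 < t0 + ε by linarith)
    refine ⟨q, hb ?_, mul_pos hσ (by linarith)⟩
    rw [Real.dist_eq, abs_lt]; constructor <;> linarith

lemma quad_side {A B C : ℚ} {t0 : ℝ} (ht : Irrational t0)
    (h0 : (A : ℝ) * t0 ^ 2 + B * t0 + C = 0) {p : ℝ → Prop} (h : ∀ᶠ t in 𝓝 t0, p t) :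
    ∃ q : ℚ, p q ∧ 0 ≤ (A : ℝ) * (q : ℝ) ^ 2 + B * q + C := by
  by_cases hz : (B : ℝ) + t0 * ((2 * A : ℚ) : ℝ) = 0
  · obtain ⟨h1, h2⟩ := irr_lin ht hz
    have h3 : A = 0 := by linarith
    subst h1 h3
    obtain ⟨q, hq, -⟩ := rat_side one_ne_zero h
    refine ⟨q, hq, ?_⟩
    simp at h0 ⊢
    exact h0.ge
  · push_cast at hz
    have hc : ContinuousAt (fun t : ℝ => (B + t0 * (2 * A)) * (A * (t + t0) + B)) t0 := by fun_prop
    have h1 := hc.eventually (lt_mem_nhds (a := 0) (by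
      have : 0 < ((B:ℝ) + t0 * (2 * A)) ^ 2 := by positivity
      nlinarith))
    obtain ⟨q, ⟨h2, h3⟩, h4⟩ := rat_side hz (h.and h1)
    refine ⟨q, h2, ?_⟩
    have e : (A : ℝ) * (q : ℝ) ^ 2 + B * q + C = (q - t0) * (A * (q + t0) + B) := by
      linear_combination h0
    rw [e]
    have h5 := mul_pos h3 h4
    have h6 : 0 < ((B:ℝ) + t0 * (2 * A)) ^ 2 := by positivity
    have h7 : 0 < ((B:ℝ) + t0 * (2 * A)) ^ 2 * ((q - t0) * (A * (q + t0) + B)) := by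
      linear_combination h5
    exact (pos_of_mul_pos_right h7 h6.le).le

lemma cont_det3 {X : Type*} [TopologicalSpace X] {f g h : X → Fin 3 → ℝ} (hf : Continuous f)
    (hg : Continuous g) (hh : Continuous h) : Continuous fun x => det3 (f x) (g x) (h x) := by
  unfold det3; fun_prop

lemma cramer3 (a b e x : Fin 3 → ℝ) :
    det3 a b e • x = det3 x b e • a + det3 a x e • b + det3 a b x • e := by
  ext i
  simp only [Pi.add_apply, Pi.smul_apply, smul_eq_mul, det3]
  fin_cases i <;> simp <;> ring

lemma tri {d : ℕ} (w : Fin d → Fin 3 → ℝ) (a b e : Fin d) (x : Fin 3 → ℝ) (α β γ : ℝ)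
    (hα : 0 < α) (hβ : 0 < β) (hx : x = α • w a + β • w b + γ • w e)
    (hD : det3 (w a) (w b) (w e) ≠ 0) :
    ∀ᶠ w' in 𝓝 w, 0 ≤ det3 (w' a) (w' b) x * det3 (w' a) (w' b) (w' e) → InC w' x := by
  have hD2 : 0 < det3 (w a) (w b) (w e) ^ 2 := by positivity
  have c1 : Continuous fun w' : Fin d → Fin 3 → ℝ => det3 x (w' b) (w' e) * det3 (w' a) (w' b) (w' e) :=
    (cont_det3 (by fun_prop) (by fun_prop) (by fun_prop)).mul
      (cont_det3 (by fun_prop) (by fun_prop) (by fun_prop))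
  have c2 : Continuous fun w' : Fin d → Fin 3 → ℝ => det3 (w' a) x (w' e) * det3 (w' a) (w' b) (w' e) :=
    (cont_det3 (by fun_prop) (by fun_prop) (by fun_prop)).mul
      (cont_det3 (by fun_prop) (by fun_prop) (by fun_prop))
  have c3 : Continuous fun w' : Fin d → Fin 3 → ℝ => det3 (w' a) (w' b) (w' e) :=
      (cont_det3 (by fun_prop) (by fun_prop) (by fun_prop))
  have e1 : 0 < det3 x (w b) (w e) * det3 (w a) (w b) (w e) := by
    have : det3 x (w b) (w e) = α * det3 (w a) (w b) (w e) := by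
      rw [hx]; simp [det3]; ring
    rw [this, mul_assoc, ← sq]; positivity
  have e2 : 0 < det3 (w a) x (w e) * det3 (w a) (w b) (w e) := by
    have : det3 (w a) x (w e) = β * det3 (w a) (w b) (w e) := by
      rw [hx]; simp [det3]; ring
    rw [this, mul_assoc, ← sq]; positivity
  filter_upwards [c1.continuousAt.eventually (lt_mem_nhds e1),
    c2.continuousAt.eventually (lt_mem_nhds e2), c3.continuousAt.eventually_ne hD] with w' h1 h2 h3 h4
  set D := det3 (w' a) (w' b) (w' e)
  have hx' : x = (det3 x (w' b) (w' e) * D / D ^ 2) • w' a + (det3 (w' a) x (w' e) * D / D ^ 2) • w' b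
      + (det3 (w' a) (w' b) x * D / D ^ 2) • w' e := by
    have := congrArg (fun y => D⁻¹ • y) (cramer3 (w' a) (w' b) (w' e) x)
    simp only [smul_add, smul_smul] at this
    rw [inv_mul_cancel₀ h3, one_smul] at this
    rw [this]
    congr 1
    · congr 1
      · congr 1; rw [← this]; field_simp
      · congr 1; rw [← this]; field_simp
    · congr 1; rw [← this]; field_simp
  rw [hx']
  exact (((InC.self w' a).smul (by positivity)).add ((InC.self w' b).smul (by positivity))).add
    ((InC.self w' e).smul (by positivity))

def Edge {m d : ℕ} (v : Fin m → Fin 3 → ℚ) (w : Fin d → Fin 3 → ℝ) (k l : Fin d) (j : Fin m) : Prop :=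
  ¬ Par (w k) (w l) ∧ (∃ α β : ℝ, 0 < α ∧ 0 < β ∧ rc (v j) = α • w k + β • w l) ∧
    ∀ i, 0 ≤ det3 (w k) (w l) (w i)

lemma sum_single {d r : ℕ} (w : Fin d → Fin r → ℝ) (k : Fin d) (x : ℝ) :
    ∑ i, (Pi.single k x : Fin d → ℝ) i • w i = x • w k := by
  rw [Finset.sum_eq_single k] <;> simp +contextual

lemma supp_cases {d : ℕ} {w : Fin d → Fin 3 → ℝ} {x : Fin 3 → ℝ} (h : InC w x) :
    x = 0 ∨ (∃ (k : Fin d) (c : ℝ), 0 < c ∧ x = c • w k) ∨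
    (∃ (k l : Fin d) (α β : ℝ), ¬ Par (w k) (w l) ∧ 0 < α ∧ 0 < β ∧ x = α • w k + β • w l) ∨
    (∃ (a b e : Fin d) (α β γ : ℝ), det3 (w a) (w b) (w e) ≠ 0 ∧ 0 < α ∧ 0 < β ∧ 0 < γ ∧
      x = α • w a + β • w b + γ • w e) := by
  classical
  obtain ⟨c, hc0, hc1, hc2⟩ := carath h
  set S := Finset.univ.filter fun k => c k ≠ 0 with hS
  have hxS : x = ∑ k ∈ S, c k • w k := by
    rw [hc1]
    symm
    apply Finset.sum_subset (Finset.subset_univ _)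
    intro k _ hk
    have : c k = 0 := by simpa [hS] using hk
    simp [this]
  have hpos : ∀ k ∈ S, 0 < c k := fun k hk =>
    lt_of_le_of_ne (hc0 k) (Ne.symm (by simpa [hS] using hk))
  have hS0 : ∀ k, c k = 0 → k ∉ S := fun k hk => by simp [hS, hk]
  have hli : LinearIndependent ℝ (fun k : S => w k) := by
    rw [Fintype.linearIndependent_iff]
    intro g hg k
    have := hc2 (fun i => if h : i ∈ S then g ⟨i, h⟩ else 0) (fun i hi => by simp [hS0 i hi]) (by
      rw [← hg, ← Finset.sum_subset (Finset.subset_univ S), ← Finset.sum_coe_sort]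
      · simp
      · intro i _ hi; simp [hi])
    have := congrFun this k
    simpa using this
  have hcard : S.card ≤ 3 := by
    have := hli.fintype_card_le_finrank
    simpa using this
  have h2 : ∀ k ∈ S, ∀ l ∈ S, k ≠ l → ∀ x y : ℝ, x • w k + y • w l = 0 → x = 0 ∧ y = 0 := by
    intro k hk l hl hkl x y hxy
    have := hc2 (Pi.single k x + Pi.single l y) (fun i hi => by
      have := hS0 i hi
      have h1 : i ≠ k := by rintro rfl; exact this hk
      have h2 : i ≠ l := by rintro rfl; exact this hl
      simp [h1, h2]) (by
      simp only [Pi.add_apply, add_smul, Finset.sum_add_distrib, sum_single]; exact hxy)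
    have h3 := congrFun this k
    have h4 := congrFun this l
    simp [hkl, hkl.symm] at h3 h4
    exact ⟨h3, h4⟩
  have hpar : ∀ k ∈ S, ∀ l ∈ S, k ≠ l → ¬ Par (w k) (w l) := by
    intro k hk l hl hkl hp
    by_cases hz : w k = 0
    · have := (h2 k hk l hl hkl 1 0 (by simp [hz])).1
      norm_num at this
    · obtain ⟨s, hs⟩ := hp.exists_smul hz
      have := (h2 k hk l hl hkl s (-1) (by simp [hs])).2
      norm_num at this
  interval_cases hcd : S.card
  · left
    rw [Finset.card_eq_zero] at hcd
    rw [hxS, hcd]; simp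
  · right; left
    obtain ⟨k, hk⟩ := Finset.card_eq_one.1 hcd
    refine ⟨k, c k, hpos k (by simp [hk]), ?_⟩
    rw [hxS, hk]; simp
  · right; right; left
    obtain ⟨k, l, hkl, hk⟩ := Finset.card_eq_two.1 hcd
    refine ⟨k, l, c k, c l, hpar k (by simp [hk]) l (by simp [hk]) hkl, hpos k (by simp [hk]),
      hpos l (by simp [hk]), ?_⟩
    rw [hxS, hk, Finset.sum_pair hkl]
  · right; right; right
    obtain ⟨a, b, e, hab, hae, hbe, hk⟩ := Finset.card_eq_three.1 hcd
    refine ⟨a, b, e, c a, c b, c e, ?_, hpos a (by simp [hk]), hpos b (by simp [hk]),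
      hpos e (by simp [hk]), ?_⟩
    · intro hD
      obtain ⟨x, y, hxy⟩ := det3_zero_span hD (hpar a (by simp [hk]) b (by simp [hk]) hab)
      have := hc2 (Pi.single a x + Pi.single b y + Pi.single e (-1)) (fun i hi => by
        have := hS0 i hi
        rw [hk] at this
        simp at this
        simp [this]) (by
        simp only [Pi.add_apply, add_smul, Finset.sum_add_distrib, sum_single]; rw [hxy]; simp; abel)
      have := congrFun this e
      simp [hae.symm, hbe.symm] at this
    · rw [hxS, hk, Finset.sum_insert (by simp [hab, hae]), Finset.sum_pair hbe, add_assoc]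

lemma det3_swap (a b c : Fin 3 → ℝ) : det3 b a c = - det3 a b c := by
  simp [det3]; ring

lemma cone_pert {m d : ℕ} {v : Fin m → Fin 3 → ℚ} {w : Fin d → Fin 3 → ℝ}
    (hs : ∀ x : Fin 3 → ℝ, ∃ c : Fin m → ℝ, x = ∑ j, c j • rc (v j))
    (hw : ∀ j, InC w (rc (v j))) (j : Fin m) :
    ∀ᶠ w' in 𝓝 w, (∀ k, IsRat (w k) → w' k = w k) →
      (∀ k l j, Edge v w k l j → 0 ≤ det3 (w' k) (w' l) (rc (v j))) → InC w' (rc (v j)) := by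
  have hspan : ∀ k l, ¬ Par (w k) (w l) → ∃ i, det3 (w k) (w l) (w i) ≠ 0 := by
    intro k l hp
    by_contra hcon
    push Not at hcon
    have hlin : ∀ x, det3 (w k) (w l) x = 0 := by
      let f : (Fin 3 → ℝ) →ₗ[ℝ] ℝ :=
        { toFun := fun x => det3 (w k) (w l) x
          map_add' := fun x y => by simp [det3]; ring
          map_smul' := fun c x => by simp [det3]; ring }
      have hf : ∀ i, f (w i) = 0 := hcon
      intro x
      change f x = 0
      obtain ⟨c, rfl⟩ := hs x
      simp only [map_sum, map_smul]
      refine Finset.sum_eq_zero fun j _ => ?_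
      obtain ⟨b, -, hb⟩ := hw j
      rw [hb]; simp [hf]
    apply hp
    have h0 := hlin ![1, 0, 0]
    have h1 := hlin ![0, 1, 0]
    have h2 := hlin ![0, 0, 1]
    simp [det3] at h0 h1 h2
    exact ⟨by linarith, by linarith, by linarith⟩
  rcases supp_cases (hw j) with h | ⟨k, c, hc, h⟩ | ⟨k, l, α, β, hp, hα, hβ, h⟩ | ⟨a, b, e, α, β, γ, hD, hα, hβ, hγ, h⟩
  · exact Eventually.of_forall fun w' _ _ => h ▸ InC.zero w'
  · refine Eventually.of_forall fun w' hr _ => ?_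
    have : IsRat (w k) := IsRat.of_smul hc.ne' (h ▸ isRat_rc _)
    rw [h, ← hr k this]
    exact (InC.self w' k).smul hc.le
  · have pos : ∀ (k l : Fin d) (α β : ℝ), 0 < α → 0 < β → rc (v j) = α • w k + β • w l → ∀ i,
        0 < det3 (w k) (w l) (w i) →
        ∀ᶠ w' in 𝓝 w, 0 ≤ det3 (w' k) (w' l) (rc (v j)) → InC w' (rc (v j)) := by
      intro k l α β hα hβ h i hi
      have c3 : Continuous fun w' : Fin d → Fin 3 → ℝ => det3 (w' k) (w' l) (w' i) :=
        (cont_det3 (by fun_prop) (by fun_prop) (by fun_prop))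
      filter_upwards [tri w k l i (rc (v j)) α β 0 hα hβ (by simpa using h) hi.ne',
        c3.continuousAt.eventually (lt_mem_nhds hi)] with w' h1 h2 h3
      exact h1 (mul_nonneg h3 h2.le)
    by_cases h1 : ∃ i, 0 < det3 (w k) (w l) (w i)
    · by_cases h2 : ∃ i, det3 (w k) (w l) (w i) < 0
      · obtain ⟨i1, hi1⟩ := h1
        obtain ⟨i2, hi2⟩ := h2
        filter_upwards [pos k l α β hα hβ h i1 hi1,
          pos l k β α hβ hα (by rw [h, add_comm]) i2 (by rw [det3_swap]; linarith)] with w' e1 e2 _ _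
        rcases le_total 0 (det3 (w' k) (w' l) (rc (v j))) with h5 | h5
        · exact e1 h5
        · exact e2 (by rw [det3_swap]; linarith)
      · push Not at h2
        obtain ⟨i1, hi1⟩ := h1
        filter_upwards [pos k l α β hα hβ h i1 hi1] with w' e1 _ he
        exact e1 (he k l j ⟨hp, ⟨α, β, hα, hβ, h⟩, h2⟩)
    · push Not at h1
      obtain ⟨i, hi⟩ := hspan k l hp
      have hi' := lt_of_le_of_ne (h1 i) hi
      filter_upwards [pos l k β α hβ hα (by rw [h, add_comm]) i (by rw [det3_swap]; linarith)] with w' e1 _ he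
      exact e1 (he l k j ⟨fun h => hp h.symm, ⟨β, α, hβ, hα, by rw [h, add_comm]⟩, fun i => by
        rw [det3_swap]; linarith [h1 i]⟩)
  · have c3 : Continuous fun w' : Fin d → Fin 3 → ℝ =>
        det3 (w' a) (w' b) (rc (v j)) * det3 (w' a) (w' b) (w' e) :=
      (cont_det3 (by fun_prop) (by fun_prop) (by fun_prop)).mul
        (cont_det3 (by fun_prop) (by fun_prop) (by fun_prop))
    have : 0 < det3 (w a) (w b) (rc (v j)) * det3 (w a) (w b) (w e) := by
      have : det3 (w a) (w b) (rc (v j)) = γ * det3 (w a) (w b) (w e) := by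
        rw [h]; simp [det3]; ring
      rw [this, mul_assoc, ← sq]; positivity
    filter_upwards [tri w a b e (rc (v j)) α β γ hα hβ h hD,
      c3.continuousAt.eventually (lt_mem_nhds this)] with w' h1 h2 _ _
    exact h1 h2.le

lemma Mx.pert {n m d : ℕ} {l : Fin n → Fin 3 → ℚ} {v : Fin m → Fin 3 → ℚ}
    {w : Fin d → Fin 3 → ℝ} (h : Mx l v w)
    (hs : ∀ x : Fin 3 → ℝ, ∃ c : Fin m → ℝ, x = ∑ j, c j • rc (v j)) :
    ∀ᶠ w' in 𝓝 w, (∀ k, IsRat (w k) → w' k = w k) →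
      (∀ i k, rc (l i) ⬝ᵥ w k = 0 → rc (l i) ⬝ᵥ w' k = 0) →
      (∀ k l j, Edge v w k l j → 0 ≤ det3 (w' k) (w' l) (rc (v j))) →
      ∀ k, IsRat (w' k) → IsRat (w k) := by
  have h1 : ∀ᶠ w' in 𝓝 w, ∀ i k, 0 < rc (l i) ⬝ᵥ w k → 0 < rc (l i) ⬝ᵥ w' k := by
    rw [eventually_all]; intro i
    rw [eventually_all]; intro k
    by_cases hp : 0 < rc (l i) ⬝ᵥ w k
    · have c : Continuous fun w' : Fin d → Fin 3 → ℝ => rc (l i) ⬝ᵥ w' k :=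
        (cont_dot _).comp (by fun_prop)
      filter_upwards [c.continuousAt.eventually (lt_mem_nhds hp)] with w' h _
      exact h
    · exact Eventually.of_forall fun w' h => absurd h hp
  have h2 := eventually_all.2 (cone_pert hs h.1.2)
  filter_upwards [h1, h2] with w' h1 h2 hr hl he
  refine h.2 w' ⟨fun i k => ?_, fun j => h2 j hr he⟩ (fun k hk => by rw [hr k hk]; exact hk)
  rcases (h.1.1 i k).eq_or_lt with h5 | h5
  · rw [hl i k h5.symm]
  · exact (h1 i k h5).le

section
variable {n m d : ℕ} {l : Fin n → Fin 3 → ℚ} {v : Fin m → Fin 3 → ℚ} {w : Fin d → Fin 3 → ℝ}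

lemma forms_near (h : Mx l v w) {k : Fin d} (hk : ¬ IsRat (w k)) {i0 : Fin n} (hn : l i0 ≠ 0)
    (h0 : rc (l i0) ⬝ᵥ w k = 0) {x : ℝ → Fin 3 → ℝ} (hx : Continuous x) {t0 : ℝ} (hxt : x t0 = w k)
    (hxn : ∀ t, rc (l i0) ⬝ᵥ x t = 0) : ∀ᶠ t in 𝓝 t0, ∀ i, 0 ≤ rc (l i) ⬝ᵥ x t := by
  rw [eventually_all]
  intro i
  rcases (h.1.1 i k).eq_or_lt with h5 | h5
  · exact Eventually.of_forall fun t => (forms_prop hn hk h0 h5.symm _ (hxn t)).ge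
  · have c : Continuous fun t => rc (l i) ⬝ᵥ x t := (cont_dot _).comp hx
    filter_upwards [c.continuousAt.eventually (lt_mem_nhds (by simpa [hxt] using h5))] with t ht
    exact ht.le

lemma isRat_line (u1 u2 : Fin 3 → ℚ) (a : ℝ) (q : ℚ) : IsRat (a • (rc u1 + (q : ℝ) • rc u2)) :=
  ⟨a, u1 + q • u2, by rw [rc_add, rc_smul]⟩

lemma pos_other (h : Mx l v w) {k : Fin d} (hk : ¬ IsRat (w k)) {i0 : Fin n} (hn : l i0 ≠ 0)
    (h0 : rc (l i0) ⬝ᵥ w k = 0) {b : Fin d} (hb : ¬ Par (w k) (w b)) : 0 < rc (l i0) ⬝ᵥ w b := by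
  refine lt_of_le_of_ne (h.1.1 i0 b) fun hz => ?_
  have hbk : b ≠ k := by
    rintro rfl
    exact hb (by simpa using par_smul (w b) 1 1)
  obtain ⟨u1, u2, a, t0, ha, ht, e, hu1, hu2, -, h4⟩ := facet (l i0) hn (w k) hk h0
  obtain ⟨c1, c2, eb⟩ := h4 (w b) hz.symm
  have hD : c1 * t0 - c2 ≠ 0 := by
    intro hD
    apply hb
    have : w b = c1 • (rc u1 + t0 • rc u2) := by
      rw [eb, smul_add, smul_smul, sub_eq_zero.1 hD]
    rw [this, e]
    exact par_smul _ _ _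
  have hf := forms_near h hk hn h0 (x := fun t => a • (rc u1 + t • rc u2)) (by fun_prop) e.symm
    (fun t => by simp [hu1, hu2])
  have hc : ContinuousAt (fun t : ℝ => 1 + (a * (t - t0) / (c1 * t0 - c2)) * c1 / a) t0 := by fun_prop
  have h1 := hc.eventually (lt_mem_nhds (a := 0) (by simp))
  obtain ⟨q, ⟨h2, h3⟩, h5⟩ := rat_side hD (hf.and h1)
  refine h.update hk _ (isRat_line u1 u2 a q) h2 ?_
  set s := a * (q - t0) / (c1 * t0 - c2) with hs
  have hs0 : 0 ≤ s := by
    have : 0 < (q - t0) / (c1 * t0 - c2) := by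
      rw [← mul_div_mul_left _ _ hD, ← sq]
      positivity
    rw [hs, mul_div_assoc]; positivity
  have hsD : s * (c1 * t0 - c2) = a * (q - t0) := by rw [hs, div_mul_cancel₀ _ hD]
  set c := 1 + s * c1 / a with hcdef
  have hca : c * a = a + s * c1 := by rw [hcdef]; field_simp
  have key : c • w k = a • (rc u1 + (q : ℝ) • rc u2) + s • w b := by
    rw [e, eb]
    ext i
    simp only [Pi.add_apply, Pi.smul_apply, smul_eq_mul]
    linear_combination (rc u1 i + t0 * rc u2 i) * hca + rc u2 i * hsD
  have e2 : w k = c⁻¹ • (a • (rc u1 + (q : ℝ) • rc u2) + s • w b) := by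
    rw [← key, smul_smul, inv_mul_cancel₀ h3.ne', one_smul]
  have h6 := InC.self (Function.update w k (a • (rc u1 + (q : ℝ) • rc u2))) k
  have h7 := InC.self (Function.update w k (a • (rc u1 + (q : ℝ) • rc u2))) b
  rw [Function.update_self] at h6
  rw [Function.update_of_ne hbk] at h7
  have := (h6.add (h7.smul hs0)).smul (inv_nonneg.2 h3.le)
  rw [← e2] at this
  exact this

lemma rat_nbr (h : Mx l v w) {k : Fin d} (hk : ¬ IsRat (w k)) {i0 : Fin n} (hn : l i0 ≠ 0)
    (h0 : rc (l i0) ⬝ᵥ w k = 0) {b : Fin d} (hb : ¬ Par (w k) (w b)) {j : Fin m} {α β : ℝ}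
    (hα : α ≠ 0) (hv : rc (v j) = α • w k + β • w b) : ¬ IsRat (w b) := by
  rintro ⟨c, q, hq⟩
  have hpos := pos_other h hk hn h0 hb
  have h1 : ((l i0 ⬝ᵥ v j : ℚ) : ℝ) = (β * c) * ((l i0 ⬝ᵥ q : ℚ) : ℝ) := by
    rw [← rc_dot, ← rc_dot, hv, hq]; simp [h0]; ring
  have h2 : ((l i0 ⬝ᵥ q : ℚ) : ℝ) ≠ 0 := by
    rw [hq, dotProduct_smul, rc_dot, smul_eq_mul] at hpos
    exact right_ne_zero_of_mul hpos.ne'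
  have h3 : β * c = (((l i0 ⬝ᵥ v j) / (l i0 ⬝ᵥ q) : ℚ) : ℝ) := by
    push_cast; rw [eq_div_iff h2]; exact h1.symm
  apply hk
  apply IsRat.of_smul hα
  have : α • w k = rc (v j - ((l i0 ⬝ᵥ v j) / (l i0 ⬝ᵥ q)) • q) := by
    rw [rc_sub, rc_smul, ← h3, hv, hq, mul_smul]; simp
  rw [this]
  exact isRat_rc _

lemma edge_prop (h : Mx l v w) {k : Fin d} (hk : ¬ IsRat (w k)) {i0 : Fin n} (hn : l i0 ≠ 0)
    (h0 : rc (l i0) ⬝ᵥ w k = 0) {b : Fin d} {j j' : Fin m} (hj : Edge v w k b j)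
    (hj' : Edge v w k b j') : ∃ μ : ℝ, 0 < μ ∧ rc (v j') = μ • rc (v j) := by
  obtain ⟨hp, ⟨α, β, hα, hβ, e⟩, -⟩ := hj
  obtain ⟨-, ⟨α', β', hα', hβ', e'⟩, -⟩ := hj'
  have hpos := pos_other h hk hn h0 hp
  have h1 : ((l i0 ⬝ᵥ v j : ℚ) : ℝ) = β * (rc (l i0) ⬝ᵥ w b) := by
    rw [← rc_dot, e]; simp [h0]
  have h2 : ((l i0 ⬝ᵥ v j' : ℚ) : ℝ) = β' * (rc (l i0) ⬝ᵥ w b) := by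
    rw [← rc_dot, e']; simp [h0]
  have h3 : (((l i0 ⬝ᵥ v j') / (l i0 ⬝ᵥ v j) : ℚ) : ℝ) = β' / β := by
    push_cast; rw [h1, h2]; field_simp
  refine ⟨β' / β, by positivity, ?_⟩
  have h4 : rc (v j') - (β' / β) • rc (v j) = (α' - β' / β * α) • w k := by
    rw [e, e']; simp only [smul_add, smul_smul, sub_smul]
    rw [div_mul_cancel₀ _ hβ.ne']; abel
  by_cases hz : α' - β' / β * α = 0
  · rw [hz, zero_smul] at h4
    exact sub_eq_zero.1 h4
  · exfalso
    apply hk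
    apply IsRat.of_smul hz
    rw [← h4, ← h3, ← rc_smul, ← rc_sub]
    exact isRat_rc _

lemma uniq_nbr (h : Mx l v w) {k : Fin d} (hk : ¬ IsRat (w k)) {i0 : Fin n} (hn : l i0 ≠ 0)
    (h0 : rc (l i0) ⬝ᵥ w k = 0) {a b : Fin d} (ha : ¬ IsRat (w a)) (hb : ¬ IsRat (w b))
    (hka : ¬ Par (w k) (w a)) (hkb : ¬ Par (w k) (w b)) (hD : det3 (w k) (w a) (w b) = 0) :
    a = b := by
  by_contra hab
  obtain ⟨x, y, e⟩ := det3_zero_span hD hka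
  have h1 := pos_other h hk hn h0 hka
  have h2 := pos_other h hk hn h0 hkb
  rw [e] at h2
  simp [h0] at h2
  have hy : 0 < y := pos_of_mul_pos_left h2 h1.le
  have hak : k ≠ a := by
    rintro rfl; exact hka (by simpa using par_smul (w k) 1 1)
  have hbk : k ≠ b := by
    rintro rfl; exact hkb (by simpa using par_smul (w k) 1 1)
  rcases le_total 0 x with hx | hx
  · exact h.not_redundant hb hbk hab hx hy.le e
  · refine h.not_redundant ha hak (Ne.symm hab) (x := -x / y) (y := 1 / y)
      (div_nonneg (by linarith) hy.le) (by positivity) ?_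
    rw [e]; ext i
    simp only [Pi.add_apply, Pi.smul_apply, smul_eq_mul]
    field_simp; ring

lemma det3_edge_zero {x y z : Fin 3 → ℝ} {α β : ℝ} (h : z = α • x + β • y) : det3 x y z = 0 := by
  rw [h]; simp [det3]; ring

lemma out_edge (h : Mx l v w)
    (hs : ∀ x : Fin 3 → ℝ, ∃ c : Fin m → ℝ, x = ∑ j, c j • rc (v j))
    {k : Fin d} (hk : ¬ IsRat (w k)) {i0 : Fin n} (hn : l i0 ≠ 0)
    (h0 : rc (l i0) ⬝ᵥ w k = 0) : ∃ b j, Edge v w k b j := by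
  by_contra hcon
  push Not at hcon
  obtain ⟨u1, u2, a, t0, ha, ht, e, hu1, hu2, ⟨κ, hκ, h3⟩, h4⟩ := facet (l i0) hn (w k) hk h0
  let W : ℝ → Fin d → Fin 3 → ℝ := fun t => Function.update w k (a • (rc u1 + t • rc u2))
  have hW : Continuous W := continuous_const.update k (by fun_prop)
  have hW0 : W t0 = w := by simp only [W]; rw [← e]; simp
  have hT : Tendsto W (𝓝 t0) (𝓝 w) := by
    have := hW.tendsto t0
    rwa [hW0] at this
  have hp := hT.eventually (h.pert hs)
  obtain ⟨q, hq, hq2⟩ := rat_side (neg_ne_zero.2 hκ) hp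
  have hWk : ∀ t, W t k = a • (rc u1 + t • rc u2) := fun t => by simp [W]
  have hWne : ∀ t b, b ≠ k → W t b = w b := fun t b hb => by simp [W, hb]
  refine hk (hq ?_ ?_ ?_ k ?_)
  · intro b hb
    exact hWne _ _ (by rintro rfl; exact hk hb)
  · intro i b hb
    by_cases hbk : b = k
    · subst hbk
      exact forms_prop hn hk h0 hb _ (by rw [hWk]; simp [hu1, hu2])
    · rw [hWne _ _ hbk]; exact hb
  · intro p b j hE
    by_cases hpk : p = k
    · subst hpk
      exact absurd hE (hcon b j)
    · rw [hWne _ _ hpk]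
      obtain ⟨hP, ⟨α, β, hα, hβ, ev⟩, -⟩ := hE
      by_cases hbk : b = k
      · subst hbk
        have hpos := pos_other h hk hn h0 (fun hh => hP hh.symm)
        have : det3 (w p) (W q b) (rc (v j)) = β * a ^ 2 * (rc (l i0) ⬝ᵥ w p) * (-κ * (q - t0)) := by
          have h5 := h3 (w p)
          rw [hWk, ev, e]
          simp only [det3, Pi.add_apply, Pi.smul_apply, smul_eq_mul] at h5 ⊢
          linear_combination (-(β * a ^ 2 * (q - t0))) * h5
        rw [this]
        positivity
      · rw [hWne _ _ hbk]
        exact (det3_edge_zero ev).ge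
  · rw [hWk]; exact isRat_line _ _ _ _

end

def detq (x y z : Fin 3 → ℚ) : ℚ :=
  x 0 * (y 1 * z 2 - y 2 * z 1) - x 1 * (y 0 * z 2 - y 2 * z 0) + x 2 * (y 0 * z 1 - y 1 * z 0)

def chainX (n : ℕ → Fin 3 → ℚ) (v : ℕ → Fin 3 → ℚ) : ℕ → (Fin 3 → ℝ) → (Fin 3 → ℝ)
  | 0, x => x
  | i + 1, x => (rc (n (i+1)) ⬝ᵥ chainX n v i x) • rc (v i) - (rc (n (i+1)) ⬝ᵥ rc (v i)) • chainX n v i x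

lemma chainX_cont (n v) (i : ℕ) : Continuous (chainX n v i) := by
  induction i with
  | zero => exact continuous_id
  | succ i ih =>
    have := (cont_dot (rc (n (i+1)))).comp ih
    exact (this.smul continuous_const).sub (ih.const_smul (rc (n (i+1)) ⬝ᵥ rc (v i)))

lemma chainX_perp (n v) (x : Fin 3 → ℝ) (h : rc (n 0) ⬝ᵥ x = 0) (i : ℕ) :
    rc (n i) ⬝ᵥ chainX n v i x = 0 := by
  cases i with
  | zero => exact h
  | succ i => rw [chainX, dotProduct_sub, dotProduct_smul, dotProduct_smul]; simp; ring

lemma chainX_rat (n v) (u1 u2 : Fin 3 → ℚ) (a : ℝ) (i : ℕ) : ∃ p r : Fin 3 → ℚ, ∀ t : ℝ,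
    chainX n v i (a • (rc u1 + t • rc u2)) = a • (rc p + t • rc r) := by
  induction i with
  | zero => exact ⟨u1, u2, fun t => rfl⟩
  | succ i ih =>
    obtain ⟨p, r, h⟩ := ih
    refine ⟨(n (i+1) ⬝ᵥ p) • v i - (n (i+1) ⬝ᵥ v i) • p,
      (n (i+1) ⬝ᵥ r) • v i - (n (i+1) ⬝ᵥ v i) • r, fun t => ?_⟩
    rw [chainX, h]
    simp only [rc_sub, rc_smul, ← rc_dot, dotProduct_smul, dotProduct_add]
    ext k
    simp only [Pi.add_apply, Pi.sub_apply, Pi.smul_apply, smul_eq_mul]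
    ring

lemma chainX_zero (n v) (x : Fin 3 → ℝ) (i : ℕ) :
    det3 (chainX n v i x) (chainX n v (i+1) x) (rc (v i)) = 0 := by
  rw [chainX]
  simp only [det3, Pi.sub_apply, Pi.smul_apply, smul_eq_mul]
  ring

lemma det3_smul (a b c : ℝ) (x y z : Fin 3 → ℝ) :
    det3 (a • x) (b • y) (c • z) = a * b * c * det3 x y z := by
  simp only [det3, Pi.smul_apply, smul_eq_mul]; ring

section
variable {n m d : ℕ} {l : Fin n → Fin 3 → ℚ} {v : Fin m → Fin 3 → ℚ} {w : Fin d → Fin 3 → ℝ}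

lemma cycle (h : Mx l v w)
    (hs : ∀ x : Fin 3 → ℝ, ∃ c : Fin m → ℝ, x = ∑ j, c j • rc (v j)) : ∀ k, IsRat (w k) := by
  classical
  by_contra hcon
  push Not at hcon
  obtain ⟨k0, hk0⟩ := hcon
  have hν : ∀ k, ∃ i, ¬ IsRat (w k) → (l i ≠ 0 ∧ rc (l i) ⬝ᵥ w k = 0) := by
    intro k
    by_cases hk : IsRat (w k)
    · obtain ⟨i, _⟩ := h.boundary hs hk0
      exact ⟨i, fun hh => absurd hk hh⟩
    · obtain ⟨i, hi⟩ := h.boundary hs hk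
      exact ⟨i, fun _ => hi⟩
  choose ν hν using hν
  have hf : ∀ k, ∃ b j, (¬ IsRat (w k) → Edge v w k b j) ∧ (IsRat (w k) → b = k) := by
    intro k
    by_cases hk : IsRat (w k)
    · obtain ⟨b, j, _⟩ := out_edge h hs hk0 (hν k0 hk0).1 (hν k0 hk0).2
      exact ⟨k, j, fun hh => absurd hk hh, fun _ => rfl⟩
    · obtain ⟨b, j, hE⟩ := out_edge h hs hk (hν k hk).1 (hν k hk).2
      exact ⟨b, j, fun _ => hE, fun hh => absurd hh hk⟩
  choose f J hE hfr using hf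
  have nbr1 : ∀ {k b j}, ¬ IsRat (w k) → Edge v w k b j → ¬ IsRat (w b) := by
    rintro k b j hk ⟨h1, ⟨α, β, hα, hβ, e⟩, -⟩
    exact rat_nbr h hk (hν k hk).1 (hν k hk).2 h1 hα.ne' e
  have nbr2 : ∀ {k b j}, ¬ IsRat (w b) → Edge v w k b j → ¬ IsRat (w k) := by
    rintro k b j hk ⟨h1, ⟨α, β, hα, hβ, e⟩, -⟩
    exact rat_nbr h hk (hν b hk).1 (hν b hk).2 (fun hh => h1 hh.symm) hβ.ne' (by rw [e, add_comm])
  have out_uniq : ∀ {k b b' j j'}, ¬ IsRat (w k) → Edge v w k b j → Edge v w k b' j' → b = b' := by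
    intro k b b' j j' hk h1 h2
    refine uniq_nbr h hk (hν k hk).1 (hν k hk).2 (nbr1 hk h1) (nbr1 hk h2) h1.1 h2.1 ?_
    have e1 := h1.2.2 b'
    have e2 := h2.2.2 b
    have : det3 (w k) (w b') (w b) = - det3 (w k) (w b) (w b') := by simp [det3]; ring
    linarith
  have in_uniq : ∀ {k a a' j j'}, ¬ IsRat (w k) → Edge v w a k j → Edge v w a' k j' → a = a' := by
    intro k b b' j j' hk h1 h2
    refine uniq_nbr h hk (hν k hk).1 (hν k hk).2 (nbr2 hk h1) (nbr2 hk h2) (fun hh => h1.1 hh.symm)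
      (fun hh => h2.1 hh.symm) ?_
    have e1 := h1.2.2 b'
    have e2 := h2.2.2 b
    have e3 : det3 (w b) (w k) (w b') = - det3 (w k) (w b) (w b') := by simp [det3]; ring
    have e4 : det3 (w b') (w k) (w b) = det3 (w k) (w b) (w b') := by simp [det3]; ring
    linarith
  have hPf : ∀ k, ¬ IsRat (w k) → ¬ IsRat (w (f k)) := fun k hk => nbr1 hk (hE k hk)
  have finj : Function.Injective f := by
    intro a b hab
    by_cases ha : IsRat (w a)
    · by_cases hb : IsRat (w b)
      · rw [hfr a ha, hfr b hb] at hab; exact hab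
      · rw [hfr a ha] at hab; rw [hab] at ha; exact absurd ha (hPf b hb)
    · by_cases hb : IsRat (w b)
      · rw [hfr b hb] at hab; rw [← hab] at hb; exact absurd hb (hPf a ha)
      · have h1 := hE a ha
        rw [hab] at h1
        exact in_uniq (hPf b hb) h1 (hE b hb)
  set κ : ℕ → Fin d := fun i => f^[i] k0 with hκ
  have hκ0 : κ 0 = k0 := rfl
  have hκs : ∀ i, κ (i+1) = f (κ i) := fun i => Function.iterate_succ_apply' f i k0
  have hPκ : ∀ i, ¬ IsRat (w (κ i)) := by
    intro i
    induction i with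
    | zero => exact hk0
    | succ i ih => rw [hκs]; exact hPf _ ih
  have hper : k0 ∈ Function.periodicPts f := finj.mem_periodicPts k0
  set N := Function.minimalPeriod f k0 with hN
  have hNpos : 0 < N := Function.minimalPeriod_pos_of_mem_periodicPts hper
  have hκmod : ∀ i, κ (i % N) = κ i := fun i => Function.iterate_mod_minimalPeriod_eq
  have hκinj : ∀ i < N, ∀ j < N, κ i = κ j → i = j := fun i hi j hj hij =>
    Function.iterate_injOn_Iio_minimalPeriod (f := f) (x := k0) hi hj hij
  have hκN : κ N = k0 := by rw [← hκmod]; simp [hκ0]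
  obtain ⟨u1, u2, a, t0, ha, ht, e, hu1, hu2, -, -⟩ :=
    facet (l (ν k0)) (hν k0 hk0).1 (w k0) hk0 (hν k0 hk0).2
  let X := chainX (fun i => l (ν (κ i))) (fun i => v (J (κ i)))
  let x : ℝ → Fin 3 → ℝ := fun t => a • (rc u1 + t • rc u2)
  have hXs : ∀ i y, X (i+1) y = (rc (l (ν (κ (i+1)))) ⬝ᵥ X i y) • rc (v (J (κ i))) -
      (rc (l (ν (κ (i+1)))) ⬝ᵥ rc (v (J (κ i)))) • X i y := fun i y => rfl
  have hlam : ∀ i, ∃ c : ℝ, 0 < c ∧ X i (w k0) = c • w (κ i) := by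
    intro i
    induction i with
    | zero => exact ⟨1, one_pos, by rw [one_smul]; rfl⟩
    | succ i ih =>
      obtain ⟨c, hc, ec⟩ := ih
      obtain ⟨h1, ⟨α, β, hα, hβ, ev⟩, -⟩ := hE _ (hPκ i)
      rw [← hκs] at h1 ev
      have hp := pos_other h (hPκ (i+1)) (hν _ (hPκ (i+1))).1 (hν _ (hPκ (i+1))).2
        (fun hh => h1 hh.symm)
      refine ⟨c * β * (rc (l (ν (κ (i+1)))) ⬝ᵥ w (κ i)), by positivity, ?_⟩
      rw [hXs, ec, ev]
      simp only [dotProduct_add, dotProduct_smul, (hν _ (hPκ (i+1))).2]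
      ext k
      simp only [Pi.add_apply, Pi.sub_apply, Pi.smul_apply, smul_eq_mul]
      ring
  choose lam hlam0 hlam using hlam
  have hidx : ∀ k, ∃ i, (∃ i < N, κ i = k) → i < N ∧ κ i = k := by
    intro k
    by_cases hk : ∃ i < N, κ i = k
    · obtain ⟨i, hi⟩ := hk; exact ⟨i, fun _ => hi⟩
    · exact ⟨0, fun hh => absurd hh hk⟩
  choose idx hidx using hidx
  let W : ℝ → Fin d → Fin 3 → ℝ := fun t k =>
    if (∃ i < N, κ i = k) then (lam (idx k))⁻¹ • X (idx k) (x t) else w k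
  have hWκ : ∀ t, ∀ i < N, W t (κ i) = (lam i)⁻¹ • X i (x t) := by
    intro t i hi
    have h1 : ∃ i' < N, κ i' = κ i := ⟨i, hi, rfl⟩
    have h2 := hidx _ h1
    have h3 := hκinj _ h2.1 _ hi h2.2
    simp only [W, if_pos h1, h3]
  have hWn : ∀ t k, (¬ ∃ i < N, κ i = k) → W t k = w k := fun t k hk => by
    simp only [W, if_neg hk]
  have hW : Continuous W := by
    refine continuous_pi fun k => ?_
    by_cases hk : ∃ i < N, κ i = k
    · simp only [W, if_pos hk]
      have hx : Continuous x := by fun_prop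
      exact ((chainX_cont _ _ (idx k)).comp hx).const_smul ((lam (idx k))⁻¹)
    · simp only [W, if_neg hk]
      exact continuous_const
  have hW0 : W t0 = w := by
    ext1 k
    by_cases hk : ∃ i < N, κ i = k
    · obtain ⟨i, hi, rfl⟩ := hk
      rw [hWκ _ _ hi, show x t0 = w k0 from e.symm, hlam, smul_smul,
        inv_mul_cancel₀ (hlam0 i).ne', one_smul]
    · exact hWn _ _ hk
  have hT : Tendsto W (𝓝 t0) (𝓝 w) := by
    have := hW.tendsto t0
    rwa [hW0] at this
  have hp := hT.eventually (h.pert hs)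
  obtain ⟨L, hL⟩ : ∃ L, N = L + 1 := ⟨N - 1, by omega⟩
  obtain ⟨p, r, hpr⟩ := chainX_rat (fun i => l (ν (κ i))) (fun i => v (J (κ i))) u1 u2 a L
  have hquad : ∀ t : ℝ, det3 (X L (x t)) (x t) (rc (v (J (κ L)))) = a ^ 2 *
      ((detq r u2 (v (J (κ L))) : ℝ) * t ^ 2 +
        ((detq p u2 (v (J (κ L))) + detq r u1 (v (J (κ L))) : ℚ) : ℝ) * t +
        (detq p u1 (v (J (κ L))) : ℝ)) := by
    intro t
    have : X L (x t) = a • (rc p + t • rc r) := hpr t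
    rw [this]
    simp only [x, det3, detq, Pi.add_apply, Pi.smul_apply, smul_eq_mul, rc]
    push_cast
    ring
  have hq0 := hquad t0
  rw [show x t0 = w k0 from e.symm, hlam] at hq0
  have hz : det3 (lam L • w (κ L)) (w k0) (rc (v (J (κ L)))) = 0 := by
    obtain ⟨h1, ⟨α, β, hα, hβ, ev⟩, -⟩ := hE _ (hPκ L)
    rw [← hκs, ← hL, hκN] at ev
    rw [ev]
    simp only [det3, Pi.add_apply, Pi.smul_apply, smul_eq_mul]
    ring
  rw [hz] at hq0
  obtain ⟨q, hq, hq2⟩ := quad_side ht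
    ((mul_eq_zero.1 hq0.symm).resolve_left (by positivity)) hp
  have hlast : 0 ≤ det3 (X L (x q)) (x q) (rc (v (J (κ L)))) := by
    rw [hquad]; positivity
  refine hk0 (hq ?_ ?_ ?_ k0 ?_)
  · intro k hk
    refine hWn _ _ ?_
    rintro ⟨i, hi, rfl⟩
    exact hPκ i hk
  · intro i k hz
    by_cases hk : ∃ i < N, κ i = k
    · obtain ⟨i', hi', rfl⟩ := hk
      rw [hWκ _ _ hi', dotProduct_smul]
      have h1 : rc (l (ν (κ i'))) ⬝ᵥ X i' (x q) = 0 :=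
        chainX_perp (fun i => l (ν (κ i))) (fun i => v (J (κ i))) (x q) (by
          change rc (l (ν k0)) ⬝ᵥ (a • (rc u1 + (q : ℝ) • rc u2)) = 0
          rw [dotProduct_smul, dotProduct_add, dotProduct_smul, hu1, hu2]; simp) i'
      rw [forms_prop (hν _ (hPκ i')).1 (hPκ i') (hν _ (hPκ i')).2 hz _ h1, smul_zero]
    · rw [hWn _ _ hk]; exact hz
  · intro k b j hkb
    have main : ∀ i < N, k = κ i → 0 ≤ det3 (W q k) (W q b) (rc (v j)) := by
      rintro i hi rfl
      have hb : b = κ (i+1) := by rw [hκs]; exact out_uniq (hPκ i) hkb (hE _ (hPκ i))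
      subst hb
      have hE' := hE _ (hPκ i)
      rw [← hκs] at hE'
      obtain ⟨μ, hμ, ev⟩ := edge_prop h (hPκ i) (hν _ (hPκ i)).1 (hν _ (hPκ i)).2 hE' hkb
      have p1 := hlam0 i
      rw [hWκ _ _ hi, ev]
      by_cases hi1 : i + 1 < N
      · rw [hWκ _ _ hi1, det3_smul]
        have : det3 (X i (x q)) (X (i+1) (x q)) (rc (v (J (κ i)))) = 0 := chainX_zero _ _ _ _
        rw [this, mul_zero]
      · have : i = L := by omega
        subst this
        rw [← hL, hκN, ← hκ0, hWκ _ _ hNpos, det3_smul]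
        have p2 := hlam0 0
        have : X 0 (x q) = x q := rfl
        rw [this]
        positivity
    by_cases hk : ∃ i < N, κ i = k
    · obtain ⟨i, hi, hik⟩ := hk
      exact main i hi hik.symm
    by_cases hb : ∃ i < N, κ i = b
    · obtain ⟨i, hi, rfl⟩ := hb
      have h1 : κ i = f (κ (i + L)) := by
        rw [← hκs, ← hκmod (i + L + 1), show i + L + 1 = i + N by omega, Nat.add_mod_right, hκmod]
      have h2 := hE _ (hPκ (i + L))
      rw [← h1] at h2
      have h3 := in_uniq (hPκ i) hkb h2
      exact main ((i+L) % N) (Nat.mod_lt _ hNpos) (by rw [hκmod, h3])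
    · rw [hWn _ _ hk, hWn _ _ hb]
      obtain ⟨-, ⟨α, β, -, -, ev⟩, -⟩ := hkb
      exact (det3_edge_zero ev).ge
  · rw [show k0 = κ 0 from rfl, hWκ _ _ hNpos]
    exact (isRat_line u1 u2 a q).smul _

end

lemma all_rat {n m d r : ℕ} (hr : r ≤ 3) {l : Fin n → Fin r → ℚ} {v : Fin m → Fin r → ℚ}
    {w : Fin d → Fin r → ℝ} (h : Mx l v w)
    (hs : ∀ x : Fin r → ℝ, ∃ c : Fin m → ℝ, x = ∑ j, c j • rc (v j)) : ∀ k, IsRat (w k) := by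
  intro k
  by_contra hk
  interval_cases r
  · exact hk ⟨0, 0, by ext i; exact i.elim0⟩
  · exact hk ⟨w k 0, fun _ => 1, by ext i; fin_cases i; simp [rc]⟩
  · obtain ⟨i, hi, h0⟩ := h.boundary hs hk
    simp only [dotProduct, Fin.sum_univ_two, rc] at h0
    by_cases h1 : l i 0 = 0
    · have h2 : l i 1 ≠ 0 := by
        intro h2; apply hi; ext j; fin_cases j <;> simp [h1, h2]
      have h2' : (l i 1 : ℝ) ≠ 0 := by exact_mod_cast h2
      have h3 : w k 1 = 0 := by simpa [h1, h2] using h0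
      exact hk ⟨w k 0, ![1, 0], by ext j; fin_cases j <;> simp [rc, h3]⟩
    · have h1' : (l i 0 : ℝ) ≠ 0 := by exact_mod_cast h1
      refine hk ⟨w k 1, ![- l i 1 / l i 0, 1], ?_⟩
      ext j; fin_cases j
      · simp [rc]; field_simp; linarith
      · simp [rc]
  · exact hk (cycle h hs k)

lemma rank_fact {n m : ℕ} (M : Matrix (Fin n) (Fin m) ℚ) :
    ∃ (A : Matrix (Fin n) (Fin M.rank) ℚ) (B : Matrix (Fin M.rank) (Fin m) ℚ)
      (A' : Matrix (Fin M.rank) (Fin n) ℚ) (B' : Matrix (Fin m) (Fin M.rank) ℚ),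
      M = A * B ∧ A' * A = 1 ∧ B * B' = 1 := by
  let φ := M.mulVecLin
  have e : LinearMap.range φ ≃ₗ[ℚ] (Fin M.rank → ℚ) := LinearEquiv.ofFinrankEq _ _ (by
    rw [Module.finrank_fin_fun]; rfl)
  let a : (Fin M.rank → ℚ) →ₗ[ℚ] (Fin n → ℚ) := (LinearMap.range φ).subtype ∘ₗ e.symm.toLinearMap
  let b : (Fin m → ℚ) →ₗ[ℚ] (Fin M.rank → ℚ) := e.toLinearMap ∘ₗ φ.rangeRestrict
  obtain ⟨a', ha⟩ := a.exists_leftInverse_of_injective (LinearMap.ker_eq_bot.2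
    ((Submodule.injective_subtype _).comp e.symm.injective))
  obtain ⟨b', hb⟩ := b.exists_rightInverse_of_surjective (LinearMap.range_eq_top.2
    (e.surjective.comp φ.surjective_rangeRestrict))
  refine ⟨LinearMap.toMatrix' a, LinearMap.toMatrix' b, LinearMap.toMatrix' a', LinearMap.toMatrix' b',
    ?_, ?_, ?_⟩
  · rw [← LinearMap.toMatrix'_comp]
    have : a ∘ₗ b = φ := by
      ext x; simp [a, b]
    rw [this]
    exact (LinearMap.toMatrix'_toLin' M).symm
  · rw [← LinearMap.toMatrix'_comp, ha, LinearMap.toMatrix'_id]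
  · rw [← LinearMap.toMatrix'_comp, hb, LinearMap.toMatrix'_id]

abbrev cR {n m : ℕ} (M : Matrix (Fin n) (Fin m) ℚ) : Matrix (Fin n) (Fin m) ℝ := M.map ((↑) : ℚ → ℝ)

lemma cR_mul {n m r : ℕ} (A : Matrix (Fin n) (Fin r) ℚ) (B : Matrix (Fin r) (Fin m) ℚ) :
    cR (A * B) = cR A * cR B := by
  ext i j; simp [Matrix.mul_apply]

lemma cR_one {r : ℕ} : cR (1 : Matrix (Fin r) (Fin r) ℚ) = 1 := by
  ext i j; by_cases h : i = j <;> simp [Matrix.one_apply, h]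

lemma rank_cast {n m : ℕ} (M : Matrix (Fin n) (Fin m) ℚ) :
    (M.map ((↑) : ℚ → ℝ)).rank = M.rank := by
  obtain ⟨A, B, A', B', h1, h2, h3⟩ := rank_fact M
  apply le_antisymm
  · have : cR M = cR A * cR B := by rw [← cR_mul, ← h1]
    change (cR M).rank ≤ _
    rw [this]
    exact (Matrix.rank_mul_le_left _ _).trans ((Matrix.rank_le_card_width _).trans (by simp))
  · have : (1 : Matrix (Fin M.rank) (Fin M.rank) ℝ) = cR A' * cR M * cR B' := by
      rw [← cR_mul, ← cR_mul, ← cR_one]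
      congr 1
      conv_rhs => rw [show A' * M = A' * (A * B) from by rw [← h1]]
      rw [← Matrix.mul_assoc, h2, Matrix.one_mul, h3]
    have h4 : (1 : Matrix (Fin M.rank) (Fin M.rank) ℝ).rank = M.rank := by simp [Matrix.rank_one]
    rw [← h4, this]
    exact (Matrix.rank_mul_le_left _ _).trans (Matrix.rank_mul_le_right _ _)

lemma factor_of_rank {n m d : ℕ} (M : Matrix (Fin n) (Fin m) ℝ) (W : Matrix (Fin n) (Fin d) ℝ)
    (H : Matrix (Fin d) (Fin m) ℝ) (h : M = W * H) (hr : W.rank = M.rank) :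
    ∃ X : Matrix (Fin m) (Fin d) ℝ, W = M * X := by
  have hle : LinearMap.range M.mulVecLin ≤ LinearMap.range W.mulVecLin := by
    rw [h, Matrix.mulVecLin_mul]; exact LinearMap.range_comp_le_range _ _
  have heq := Submodule.eq_of_le_of_finrank_eq hle hr.symm
  have : ∀ k, ∃ x : Fin m → ℝ, M *ᵥ x = fun i => W i k := by
    intro k
    have : (fun i => W i k) ∈ LinearMap.range M.mulVecLin := by
      rw [heq]; exact ⟨Pi.single k 1, by ext i; simp [Matrix.col]⟩
    exact this
  choose x hx using this
  refine ⟨Matrix.of fun j k => x k j, ?_⟩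
  ext i k
  rw [← congrFun (hx k) i]
  simp [Matrix.mul_apply, Matrix.mulVec, dotProduct]

lemma rational_rnmf {n m d : ℕ} (M : Matrix (Fin n) (Fin m) ℚ) (hrk : M.rank ≤ 3)
    (W : Matrix (Fin n) (Fin d) ℝ) (H : Matrix (Fin d) (Fin m) ℝ) (hW : ∀ i k, 0 ≤ W i k)
    (hH : ∀ k j, 0 ≤ H k j) (hM : M.map ((↑) : ℚ → ℝ) = W * H)
    (hr : W.rank = (M.map ((↑) : ℚ → ℝ)).rank) :
    ∃ W : Matrix (Fin n) (Fin d) ℚ, ∃ H : Matrix (Fin d) (Fin m) ℚ,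
      (∀ i k, 0 ≤ W i k) ∧ (∀ k j, 0 ≤ H k j) ∧ M = W * H ∧ W.rank = M.rank := by
  obtain ⟨X, hX⟩ := factor_of_rank _ _ _ hM hr
  obtain ⟨A, B, A', B', h1, h2, h3⟩ := rank_fact M
  have h1' : cR M = cR A * cR B := by rw [← cR_mul, ← h1]
  have h2' : cR A' * cR A = 1 := by rw [← cR_mul, h2, cR_one]
  have h3' : cR B * cR B' = 1 := by rw [← cR_mul, h3, cR_one]
  let Y := cR B * X
  have hWY : W = cR A * Y := by rw [hX, show M.map ((↑) : ℚ → ℝ) = cR A * cR B from h1', Matrix.mul_assoc]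
  have hBY : cR B = Y * H := by
    have : cR A' * (cR A * cR B) = cR A' * (cR A * (Y * H)) := by
      rw [← h1', ← Matrix.mul_assoc (cR A), ← hWY]; rw [← hM]
    rwa [← Matrix.mul_assoc, h2', Matrix.one_mul, ← Matrix.mul_assoc, h2', Matrix.one_mul] at this
  let l : Fin n → Fin M.rank → ℚ := fun i => A i
  let v : Fin m → Fin M.rank → ℚ := fun j a => B a j
  let w : Fin d → Fin M.rank → ℝ := fun k a => Y a k
  have hsol : Sol l v w := by
    refine ⟨fun i k => ?_, fun j => ⟨fun k => H k j, fun k => hH k j, ?_⟩⟩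
    · have := hW i k
      rw [hWY] at this
      exact this
    · ext a
      have := congrFun (congrFun hBY a) j
      simp only [Matrix.map_apply, Matrix.mul_apply] at this
      simp only [rc, v, w, Finset.sum_apply, Pi.smul_apply, smul_eq_mul]
      rw [this]
      exact Finset.sum_congr rfl fun k _ => mul_comm _ _
  have hs : ∀ x : Fin M.rank → ℝ, ∃ c : Fin m → ℝ, x = ∑ j, c j • rc (v j) := by
    intro x
    refine ⟨cR B' *ᵥ x, ?_⟩
    have : x = cR B *ᵥ (cR B' *ᵥ x) := by rw [Matrix.mulVec_mulVec, h3', Matrix.one_mulVec]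
    conv_lhs => rw [this]
    ext a
    rw [Finset.sum_apply]
    simp only [rc, v, Pi.smul_apply, smul_eq_mul]
    change ∑ k, ((B a k : ℚ) : ℝ) * (cR B' *ᵥ x) k = _
    exact Finset.sum_congr rfl fun k _ => mul_comm _ _
  obtain ⟨w', hw'⟩ := exists_Mx l v w hsol
  obtain ⟨q, H', hq, hH', hv⟩ := rational_out hw'.1 (all_rat hrk hw' hs)
  let Q : Matrix (Fin M.rank) (Fin d) ℚ := Matrix.of fun a k => q k a
  have hB : B = Q * Matrix.of H' := by
    ext a j
    have := congrFun (hv j) a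
    simp only [v, Finset.sum_apply, Pi.smul_apply, smul_eq_mul] at this
    rw [this]
    simp only [Q, Matrix.mul_apply, Matrix.of_apply]
    exact Finset.sum_congr rfl fun k _ => mul_comm _ _
  have hfac : M = A * Q * Matrix.of H' := by rw [Matrix.mul_assoc, ← hB, ← h1]
  refine ⟨A * Q, Matrix.of H', fun i k => hq i k, hH', hfac, le_antisymm ?_ ?_⟩
  · exact (Matrix.rank_mul_le_left _ _).trans ((Matrix.rank_le_card_width _).trans (by simp))
  · conv_lhs => rw [hfac]
    exact Matrix.rank_mul_le_left _ _

/-- For a nonnegative rational matrix `M` of rank at most 3, there is a rational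
restricted NMF of inner dimension `d = rrk+(M)`; in particular the restricted
nonnegative ranks of `M` over `ℝ` and over `ℚ` coincide. -/
theorem stmt10 {n m : ℕ} (M : Matrix (Fin n) (Fin m) ℚ)
    (hMnn : ∀ i j, 0 ≤ M i j)
    (hrk : (M.map ((↑) : ℚ → ℝ)).rank ≤ 3)
    (d : ℕ) (hd : d = rrkPos (M.map ((↑) : ℚ → ℝ))) :
    (∃ W : Matrix (Fin n) (Fin d) ℚ, ∃ H : Matrix (Fin d) (Fin m) ℚ,
      (∀ i k, 0 ≤ W i k) ∧ (∀ k j, 0 ≤ H k j) ∧ M = W * H ∧ W.rank = M.rank) ∧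
    rrkPosQ M = rrkPos (M.map ((↑) : ℚ → ℝ)) := by
  rw [rank_cast] at hrk
  have hone : ∀ k j : Fin m, (0 : ℚ) ≤ (1 : Matrix (Fin m) (Fin m) ℚ) k j := by
    intro k j
    by_cases h : k = j <;> simp [Matrix.one_apply, h]
  have cast : ∀ e : ℕ, (∃ W : Matrix (Fin n) (Fin e) ℚ, ∃ H : Matrix (Fin e) (Fin m) ℚ,
      (∀ i k, 0 ≤ W i k) ∧ (∀ k j, 0 ≤ H k j) ∧ M = W * H ∧ W.rank = M.rank) →
      ∃ W : Matrix (Fin n) (Fin e) ℝ, ∃ H : Matrix (Fin e) (Fin m) ℝ,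
      (∀ i k, 0 ≤ W i k) ∧ (∀ k j, 0 ≤ H k j) ∧ (M.map ((↑) : ℚ → ℝ)) = W * H ∧
        W.rank = (M.map ((↑) : ℚ → ℝ)).rank := by
    rintro e ⟨W, H, hW, hH, hM, hr⟩
    refine ⟨cR W, cR H, fun i k => ?_, fun k j => ?_, ?_, ?_⟩
    · simpa using hW i k
    · simpa using hH k j
    · rw [← cR_mul, ← hM]
    · rw [rank_cast, rank_cast, hr]
  have hQm : ∃ W : Matrix (Fin n) (Fin m) ℚ, ∃ H : Matrix (Fin m) (Fin m) ℚ,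
      (∀ i k, 0 ≤ W i k) ∧ (∀ k j, 0 ≤ H k j) ∧ M = W * H ∧ W.rank = M.rank :=
    ⟨M, 1, hMnn, hone, by rw [Matrix.mul_one], rfl⟩
  have hmem := Nat.sInf_mem (s := {e : ℕ | ∃ W : Matrix (Fin n) (Fin e) ℝ,
    ∃ H : Matrix (Fin e) (Fin m) ℝ, (∀ i k, 0 ≤ W i k) ∧ (∀ k j, 0 ≤ H k j) ∧
      (M.map ((↑) : ℚ → ℝ)) = W * H ∧ W.rank = (M.map ((↑) : ℚ → ℝ)).rank}) ⟨m, cast m hQm⟩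
  have hmemQ := Nat.sInf_mem (s := {e : ℕ | ∃ W : Matrix (Fin n) (Fin e) ℚ,
    ∃ H : Matrix (Fin e) (Fin m) ℚ, (∀ i k, 0 ≤ W i k) ∧ (∀ k j, 0 ≤ H k j) ∧
      M = W * H ∧ W.rank = M.rank}) ⟨m, hQm⟩
  change rrkPos _ ∈ _ at hmem
  change rrkPosQ _ ∈ _ at hmemQ
  rw [← hd] at hmem
  obtain ⟨W, H, hW, hH, hWH, hr⟩ := hmem
  have hres := rational_rnmf M hrk W H hW hH hWH hr
  refine ⟨hres, le_antisymm ?_ ?_⟩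
  · rw [← hd]; exact Nat.sInf_le hres
  · exact Nat.sInf_le (cast _ hmemQ)
end
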